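/- arXiv:2102.13135 — 4 statements merged into one kernel-verified Lean document; each statement's English description precedes it below -/
import Mathlib

section
/- Let F be the adjacency matrix of a graph on N nodes drawn from SSBM(N,K,p,q) conditional on a community assignment matrix Y, and let b_1,…,b_M ∈ {0,1}^N be pairwise disjoint measurement vectors (b_i·b_j = 0 for i ≠ j) that are r-homogeneous, i.e. |supp(b_i)| = r for all i. Let B be the M×N matrix with rows b_i, let C = B F Bᵀ, and let a_i = b_i Yᵀ be the i-th row of the profile matrix A = B Yᵀ. Then the entries {C_{ij} : i > j} are mutually independent random variables, and for each i > j the law of C_{ij} is PoissonBinomial({p}^{a_i·a_j}, {q}^{r² − a_i·a_j}), i.e. the law of a sum of r² independent Bernoulli random variables of which a_i·a_j have success probability p and r² − a_i·a_j have success probability q. -/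
open MeasureTheory ProbabilityTheory
open scoped ENNReal NNReal

/-- Law (on `ℕ`, via the indicator `true ↦ 1`) of a Bernoulli random variable with
success probability `p`. -/
noncomputable def bernNat (p : ℝ≥0∞) (hp : p ≤ 1) : PMF ℕ :=
  (PMF.ofFintype (fun b : Bool => cond b p (1 - p)) (by simp [hp])).map fun b => if b then 1 else 0

/-- Law of the sum of `n` independent copies of an `ℕ`-valued random variable with law `μ`. -/
noncomputable def iidSum (μ : PMF ℕ) : ℕ → PMF ℕ
  | 0 => PMF.pure 0
  | n + 1 => (iidSum μ n).bind fun s => μ.map fun x => s + x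

/-- Poisson binomial law `PoissonBinomial({p}^m, {q}^k)`: the law of the sum of `m + k`
independent Bernoulli random variables, `m` of them with success probability `p` and
`k` of them with success probability `q`. -/
noncomputable def poissonBinomial (p q : ℝ≥0∞) (hp : p ≤ 1) (hq : q ≤ 1) (m k : ℕ) : PMF ℕ :=
  (iidSum (bernNat p hp) m).bind fun s => (iidSum (bernNat q hq) k).map fun t => s + t


/-- Restricting a sum over `V` to a subset. -/
lemma sum_subtype_ite_mem {ι : Type*} [DecidableEq ι] (V T : Finset ι) (h : T ⊆ V) (f : ι → ℕ) :
    (∑ e : V, if (e : ι) ∈ T then f e else 0) = ∑ e ∈ T, f e := by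
  rw [Finset.sum_coe_sort V (fun e => if e ∈ T then f e else 0), Finset.sum_ite_mem,
    Finset.inter_eq_right.2 h]

/-- Sums over pairwise disjoint finite blocks of an independent family are independent. -/
lemma iIndepFun_block_sums {ι κ Ω : Type*} [DecidableEq ι] [MeasurableSpace Ω]
    {μ : Measure Ω} [IsProbabilityMeasure μ] {X : ι → Ω → ℕ} (hX : ∀ e, Measurable (X e))
    (hI : iIndepFun X μ) (T : κ → Finset ι) (hT : ∀ k l, k ≠ l → Disjoint (T k) (T l)) :
    iIndepFun (fun k ω => ∑ e ∈ T k, X e ω) μ := by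
  classical
  rw [iIndepFun_iff_measure_inter_preimage_eq_mul]
  intro S s hs
  induction S using Finset.induction_on with
  | empty => simp
  | insert a S ha ih =>
    have ih' := ih (fun i hi => hs i (Finset.mem_insert_of_mem hi))
    rw [Finset.prod_insert ha, ← ih', Finset.set_biInter_insert]
    set V : Finset ι := S.biUnion T with hV
    have hdisj : Disjoint (T a) V := by
      rw [hV, Finset.disjoint_biUnion_right]
      intro k hk
      exact hT a k (fun h => ha (h ▸ hk))
    have h1 := hI.indepFun_finset (T a) V hdisj hX
    have h2 := h1.comp (φ := fun y : (T a → ℕ) => ∑ e : T a, y e)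
      (ψ := fun (y : V → ℕ) (k : S) => ∑ e : V, if (e : ι) ∈ T k then y e else 0)
      (by fun_prop) (Measurable.of_discrete)
    have h3 := h2.measure_inter_preimage_eq_mul (s a) {y | ∀ k : S, y k ∈ s k}
      (hs a (Finset.mem_insert_self _ _)) (MeasurableSet.of_discrete)
    convert h3 using 2
    · congr 1
      · ext ω
        simp only [Set.mem_preimage, Function.comp]
        rw [Finset.sum_coe_sort (T a) (fun e => X e ω)]
      · ext ω
        simp only [Set.mem_iInter, Set.mem_preimage, Function.comp, Set.mem_ofPred_eq,
          Subtype.forall]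
        refine forall₂_congr fun k hk => ?_
        rw [sum_subtype_ite_mem V (T k) (Finset.subset_biUnion_of_mem T hk) (fun e => X e ω)]
    · congr 1
      ext ω
      simp only [Set.mem_preimage, Function.comp]
      rw [Finset.sum_coe_sort (T a) (fun e => X e ω)]
    · congr 1
      ext ω
      simp only [Set.mem_iInter, Set.mem_preimage, Function.comp, Set.mem_ofPred_eq,
        Subtype.forall]
      refine forall₂_congr fun k hk => ?_
      rw [sum_subtype_ite_mem V (T k) (Finset.subset_biUnion_of_mem T hk) (fun e => X e ω)]

/-- The law of a sum of two independent `ℕ`-valued variables. -/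
lemma law_add {Ω : Type*} [MeasurableSpace Ω] {μ : Measure Ω} [IsProbabilityMeasure μ]
    {X Z : Ω → ℕ} (hX : Measurable X) (hZ : Measurable Z) (h : IndepFun X Z μ) (a b : PMF ℕ)
    (ha : μ.map X = a.toMeasure) (hb : μ.map Z = b.toMeasure) :
    μ.map (fun ω => X ω + Z ω) = (a.bind fun s => b.map fun t => s + t).toMeasure := by
  have h1 := h.map_add_eq_map_conv_map hX hZ
  change μ.map (X + Z) = _
  rw [h1, ha, hb, Measure.conv]
  ext s hs
  rw [Measure.map_apply (by fun_prop) hs, Measure.prod_apply (.of_discrete),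
    lintegral_countable', PMF.toMeasure_bind_apply _ _ _ hs]
  refine tsum_congr fun x => ?_
  rw [PMF.toMeasure_apply_singleton _ _ (.of_discrete), mul_comm,
    ← PMF.toMeasure_map (f := fun t => x + t) b (Measurable.of_discrete), Measure.map_apply .of_discrete hs]
  rfl

/-- The law of a sum of independent variables with common law `ν`. -/
lemma law_sum_iid {ι Ω : Type*} [MeasurableSpace Ω]
    {μ : Measure Ω} [IsProbabilityMeasure μ] {X : ι → Ω → ℕ} (hX : ∀ e, Measurable (X e))
    (hI : iIndepFun X μ) (ν : PMF ℕ) (S : Finset ι) (hS : ∀ e ∈ S, μ.map (X e) = ν.toMeasure) :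
    μ.map (fun ω => ∑ e ∈ S, X e ω) = (iidSum ν S.card).toMeasure := by
  classical
  induction S using Finset.induction_on with
  | empty =>
    simp only [Finset.sum_empty, Finset.card_empty, iidSum]
    rw [Measure.map_const, PMF.toMeasure_pure]
    simp
  | insert a S ha ih =>
    have ih' := ih (fun e he => hS e (Finset.mem_insert_of_mem he))
    have hind := hI.indepFun_finsetSum_of_notMem hX ha
    have e1 : (∑ j ∈ S, X j) = fun ω => ∑ e ∈ S, X e ω := by ext ω; simp
    rw [e1] at hind
    have := law_add (by fun_prop) (hX a) hind _ _ ih' (hS a (Finset.mem_insert_self _ _))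
    rw [Finset.card_insert_of_notMem ha]
    simp only [Finset.sum_insert ha, iidSum, add_comm (X a _)]
    exact this

/-- The law of a sum of independent variables having one of two laws. -/
lemma law_sum_two {ι Ω : Type*} [MeasurableSpace Ω]
    {μ : Measure Ω} [IsProbabilityMeasure μ] {X : ι → Ω → ℕ} (hX : ∀ e, Measurable (X e))
    (hI : iIndepFun X μ) (p q : ℝ≥0∞) (hp : p ≤ 1) (hq : q ≤ 1) (P : ι → Prop) [DecidablePred P]
    (S : Finset ι)
    (hS : ∀ e ∈ S, μ.map (X e) = (if P e then bernNat p hp else bernNat q hq).toMeasure) :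
    μ.map (fun ω => ∑ e ∈ S, X e ω) =
      (poissonBinomial p q hp hq (S.filter P).card (S.filter (fun e => ¬ P e)).card).toMeasure := by
  classical
  have h1 := law_sum_iid hX hI (bernNat p hp) (S.filter P) (fun e he => by
    rw [Finset.mem_filter] at he
    rw [hS e he.1, if_pos he.2])
  have h2 := law_sum_iid hX hI (bernNat q hq) (S.filter (fun e => ¬ P e)) (fun e he => by
    rw [Finset.mem_filter] at he
    rw [hS e he.1, if_neg he.2])
  have hb := iIndepFun_block_sums hX hI
    (fun b : Bool => if b then S.filter P else S.filter (fun e => ¬ P e)) (by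
      have := Finset.disjoint_filter_filter_not S S P
      intro k l hkl
      cases k <;> cases l <;> simp_all [disjoint_comm])
  have hb' := hb.indepFun (show true ≠ false by decide)
  simp only [if_true, Bool.false_eq_true, if_false] at hb'
  have := law_add (by fun_prop) (by fun_prop) hb' _ _ h1 h2
  simp only [Finset.sum_filter_add_sum_filter_not] at this
  exact this

/-- The edges `u < v` joining the supports of two rows. -/
def crossEdges {N : ℕ} (b c : Fin N → ℕ) : Finset {e : Fin N × Fin N // e.1 < e.2} :=
  Finset.univ.filter fun e =>
    (b e.1.1 ≠ 0 ∧ c e.1.2 ≠ 0) ∨ (b e.1.2 ≠ 0 ∧ c e.1.1 ≠ 0)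

/-- Sum over cross edges of a symmetric function as a bilinear form. -/
lemma sum_crossEdges {N : ℕ} (b c : Fin N → ℕ) (hb : ∀ u, b u = 0 ∨ b u = 1)
    (hc : ∀ u, c u = 0 ∨ c u = 1) (hd : ∀ u, b u * c u = 0)
    (f : Fin N → Fin N → ℕ) (hf : ∀ u v, f u v = f v u) :
    ∑ e ∈ crossEdges b c, f e.1.1 e.1.2 = ∑ u, ∑ v, b u * f u v * c v := by
  classical
  have hd' : ∀ u, b u ≠ 0 → c u ≠ 0 → False := fun u h1 h2 => by
    have := hd u
    simp_all
  have h1 : ∑ u, ∑ v, b u * f u v * c v =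
      ∑ x ∈ Finset.univ.filter (fun x : Fin N × Fin N => b x.1 ≠ 0 ∧ c x.2 ≠ 0), f x.1 x.2 := by
    rw [← Fintype.sum_prod_type' (f := fun u v => b u * f u v * c v), Finset.sum_filter]
    refine Finset.sum_congr rfl fun x _ => ?_
    rcases hb x.1 with h | h <;> rcases hc x.2 with h' | h' <;> simp [h, h']
  rw [h1]
  refine Finset.sum_bij
    (fun e _ => if b e.1.1 ≠ 0 then (e.1.1, e.1.2) else (e.1.2, e.1.1)) ?_ ?_ ?_ ?_
  · rintro ⟨⟨u, v⟩, h⟩ he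
    simp only [crossEdges, Finset.mem_filter, Finset.mem_univ, true_and] at he ⊢
    have := hd' u
    split_ifs <;> simp <;> tauto
  · rintro ⟨⟨u, v⟩, h⟩ he ⟨⟨u', v'⟩, h'⟩ he' heq
    simp only [Subtype.mk.injEq, Prod.mk.injEq] at heq ⊢
    simp only at h h'
    split_ifs at heq <;> simp only [Prod.mk.injEq] at heq <;> omega
  · rintro ⟨u, v⟩ hx
    simp only [Finset.mem_filter, Finset.mem_univ, true_and] at hx
    have hbv : b v = 0 := by
      by_contra h
      exact hd' v h hx.2
    rcases lt_trichotomy u v with h | h | h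
    · exact ⟨⟨(u, v), h⟩, by simp [crossEdges, hx], by simp [hx]⟩
    · subst h; exact (hx.1 hbv).elim
    · exact ⟨⟨(v, u), h⟩, by simp [crossEdges, hx], by simp [hbv]⟩
  · rintro ⟨⟨u, v⟩, h⟩ he
    simp only
    split_ifs
    · rfl
    · exact hf u v

/-- If `F ~ SSBM(N,K,p,q)` conditional on the community assignment matrix `Y`
and `B` is an `r`-homogeneous measurement matrix with pairwise disjoint rows, then the entries
`C_{ij}`, `i > j`, of `C = B F Bᵀ` are mutually independent, and `C_{ij}` has the Poisson
binomial law with `a_i·a_j` successes of probability `p` and `r² − a_i·a_j` of probability `q`,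
where `A = B Yᵀ` is the profile matrix. -/
theorem coarsened_SSBM_entries_indep_poissonBinomial
    {N K M r : ℕ} (hr : 0 < r) (hrM : r * M ≤ N)
    (p q : ℝ≥0∞) (hp : p ≤ 1) (hq : q ≤ 1)
    -- the community assignment matrix `Y`
    (Y : Matrix (Fin K) (Fin N) ℕ)
    (hY01 : ∀ k u, Y k u = 0 ∨ Y k u = 1)
    (hYcol : ∀ u, ∃! k, Y k u = 1)
    -- the measurement matrix `B`, with pairwise disjoint `r`-homogeneous rows
    (B : Matrix (Fin M) (Fin N) ℕ)
    (hB01 : ∀ i u, B i u = 0 ∨ B i u = 1)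
    (hBdisj : ∀ i j, i ≠ j → ∀ u, B i u * B j u = 0)
    (hBhom : ∀ i, (Finset.univ.filter fun u => B i u ≠ 0).card = r)
    -- the random adjacency matrix `F`, drawn from `SSBM(N,K,p,q)` conditional on `Y`
    {Ω : Type*} [MeasurableSpace Ω] (μ : Measure Ω) [IsProbabilityMeasure μ]
    (F : Ω → Matrix (Fin N) (Fin N) ℕ)
    (hFmeas : ∀ u v, Measurable fun ω => F ω u v)
    (hFsymm : ∀ ω u v, F ω u v = F ω v u)
    (hFdiag : ∀ ω u, F ω u u = 0)
    (hF01 : ∀ ω u v, F ω u v = 0 ∨ F ω u v = 1)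
    (hFindep : iIndepFun
      (fun (e : {e : Fin N × Fin N // e.1 < e.2}) ω => F ω e.1.1 e.1.2) μ)
    (hFlaw : ∀ u v : Fin N, u < v →
      μ.map (fun ω => F ω u v) =
        (if ∃ k, Y k u = 1 ∧ Y k v = 1 then bernNat p hp else bernNat q hq).toMeasure) :
    -- conclusion: the entries `C_{ij}`, `i > j`, of `C = B F Bᵀ` are mutually independent …
    iIndepFun
        (fun (e : {e : Fin M × Fin M // e.2 < e.1}) ω =>
          (B * F ω * B.transpose) e.1.1 e.1.2) μ ∧
      -- … and `C_{ij}` has law `PoissonBinomial({p}^{a_i·a_j}, {q}^{r² − a_i·a_j})`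
      ∀ i j : Fin M, j < i →
        μ.map (fun ω => (B * F ω * B.transpose) i j) =
          (poissonBinomial p q hp hq
              ((B * Y.transpose * (B * Y.transpose).transpose) i j)
              (r ^ 2 - (B * Y.transpose * (B * Y.transpose).transpose) i j)).toMeasure := by
  classical
  have hC : ∀ (i j : Fin M), i ≠ j → ∀ ω, (B * F ω * B.transpose) i j =
      ∑ e ∈ crossEdges (B i) (B j), F ω e.1.1 e.1.2 := by
    intro i j hij ω
    rw [sum_crossEdges (B i) (B j) (hB01 i) (hB01 j) (hBdisj i j hij) (F ω) (hFsymm ω)]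
    simp only [Matrix.mul_apply, Matrix.transpose_apply, Finset.sum_mul]
    exact Finset.sum_comm
  have huniq : ∀ i j u, B i u ≠ 0 → B j u ≠ 0 → i = j := by
    intro i j u h1 h2
    by_contra h
    exact (mul_ne_zero h1 h2) (hBdisj i j h u)
  have hXm : ∀ e : {e : Fin N × Fin N // e.1 < e.2}, Measurable fun ω => F ω e.1.1 e.1.2 :=
    fun e => hFmeas _ _
  refine ⟨?_, ?_⟩
  · have := iIndepFun_block_sums hXm hFindep
      (fun e : {e : Fin M × Fin M // e.2 < e.1} => crossEdges (B e.1.1) (B e.1.2)) (by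
        rintro ⟨⟨i, j⟩, h⟩ ⟨⟨i', j'⟩, h'⟩ hne
        simp only at h h'
        rw [Finset.disjoint_left]
        rintro ⟨⟨u, v⟩, huv⟩ h1 h2
        simp only [crossEdges, Finset.mem_filter, Finset.mem_univ, true_and] at h1 h2
        apply hne
        simp only [Subtype.mk.injEq, Prod.mk.injEq]
        rcases h1 with ⟨a, b⟩ | ⟨a, b⟩ <;> rcases h2 with ⟨c, d⟩ | ⟨c, d⟩
        · exact ⟨huniq _ _ _ a c, huniq _ _ _ b d⟩
        · have e1 := huniq _ _ _ a d
          have e2 := huniq _ _ _ b c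
          omega
        · have e1 := huniq _ _ _ a d
          have e2 := huniq _ _ _ b c
          omega
        · exact ⟨huniq _ _ _ a c, huniq _ _ _ b d⟩)
    convert this using 3 with e ω
    exact hC _ _ (ne_of_gt e.2) _
  · intro i j hji
    have hij : i ≠ j := ne_of_gt hji
    simp only [hC i j hij]
    have hlaw := law_sum_two hXm hFindep p q hp hq
      (fun e => ∃ k, Y k e.1.1 = 1 ∧ Y k e.1.2 = 1) (crossEdges (B i) (B j))
      (fun e _ => hFlaw _ _ e.2)
    rw [hlaw]
    have hsumB : ∀ i, ∑ u, B i u = r := by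
      intro i
      rw [← hBhom i, Finset.card_filter]
      refine Finset.sum_congr rfl fun u _ => ?_
      rcases hB01 i u with h | h <;> simp [h]
    have hcard : (crossEdges (B i) (B j)).card = r ^ 2 := by
      have := sum_crossEdges (B i) (B j) (hB01 i) (hB01 j) (hBdisj i j hij) (fun _ _ => 1)
        (fun _ _ => rfl)
      simp only [Finset.sum_const, smul_eq_mul, mul_one, ← Finset.mul_sum, ← Finset.sum_mul,
        hsumB] at this
      rw [this, sq]
    have hsame : ∀ u v, (∑ k, Y k u * Y k v) = if ∃ k, Y k u = 1 ∧ Y k v = 1 then 1 else 0 := by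
      intro u v
      split_ifs with h
      · obtain ⟨k, hk1, hk2⟩ := h
        rw [Finset.sum_eq_single k]
        · simp [hk1, hk2]
        · intro l _ hl
          rcases hY01 l u with h | h
          · simp [h]
          · exact (hl ((hYcol u).unique h hk1)).elim
        · simp
      · refine Finset.sum_eq_zero fun k _ => ?_
        rcases hY01 k u with h1 | h1
        · simp [h1]
        · rcases hY01 k v with h2 | h2
          · simp [h2]
          · exact (h ⟨k, h1, h2⟩).elim
    have hm : ((crossEdges (B i) (B j)).filter
        (fun e => ∃ k, Y k e.1.1 = 1 ∧ Y k e.1.2 = 1)).card =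
        (B * Y.transpose * (B * Y.transpose).transpose) i j := by
      have := sum_crossEdges (B i) (B j) (hB01 i) (hB01 j) (hBdisj i j hij)
        (fun u v => ∑ k, Y k u * Y k v) (fun u v => by simp only [mul_comm])
      rw [Finset.card_filter]
      simp only [← hsame]
      rw [this]
      simp only [Matrix.mul_apply, Matrix.transpose_apply, Finset.sum_mul, Finset.mul_sum]
      rw [Finset.sum_comm' (t' := Finset.univ) (s' := fun _ => Finset.univ) (by simp)]
      rw [Finset.sum_congr rfl fun v _ => Finset.sum_comm, Finset.sum_comm]
      refine Finset.sum_congr rfl fun k _ => ?_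
      refine Finset.sum_congr rfl fun u _ => Finset.sum_congr rfl fun v _ => ?_
      ring
    have hk : ((crossEdges (B i) (B j)).filter
        (fun e => ¬ ∃ k, Y k e.1.1 = 1 ∧ Y k e.1.2 = 1)).card =
        r ^ 2 - (B * Y.transpose * (B * Y.transpose).transpose) i j := by
      have := Finset.card_filter_add_card_filter_not (s := crossEdges (B i) (B j))
        (fun e => ∃ k, Y k e.1.1 = 1 ∧ Y k e.1.2 = 1)
      rw [hm, hcard] at this
      omega
    rw [hm, hk]
end

section
/- Let F be drawn from SSBM(N,K,p,q) conditional on a community assignment matrix Y, and let B be an r-homogeneous measurement matrix with pairwise disjoint rows b_1,…,b_M that is CO-1 with respect to Y, so that each profile vector a_i = b_i Yᵀ is supported on a single community, giving a profile vector x ∈ [K]^M with x_i the unique community in supp(a_i). Then the entries {C_{ij} : i > j} of C = B F Bᵀ are mutually independent, with C_{ij} ~ Binomial(r², p) if x_i = x_j and C_{ij} ~ Binomial(r², q) if x_i ≠ x_j. -/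
open MeasureTheory ProbabilityTheory
open scoped ENNReal NNReal

/-- The binomial law `Binomial(n,p)` on `ℕ`: the law of the sum of `n` independent
Bernoulli(`p`) random variables. -/
noncomputable def binomialNat (p : ℝ≥0∞) (hp : p ≤ 1) (n : ℕ) : PMF ℕ :=
  iidSum (bernNat p hp) n

lemma map_add_toMeasure {Ω : Type*} [MeasurableSpace Ω] (μ : Measure Ω) [IsProbabilityMeasure μ]
    (X Z : Ω → ℕ) (hX : Measurable X) (hZ : Measurable Z) (h : IndepFun X Z μ)
    (a b : PMF ℕ) (ha : μ.map X = a.toMeasure) (hb : μ.map Z = b.toMeasure) :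
    μ.map (X + Z) = (a.bind fun s => b.map fun x => s + x).toMeasure := by
  have hprod := (indepFun_iff_map_prod_eq_prod_map_map hX.aemeasurable hZ.aemeasurable).1 h
  have h1 : μ.map (X + Z) = (μ.map fun ω => (X ω, Z ω)).map (fun t => t.1 + t.2) := by
    rw [Measure.map_map (by fun_prop) (by fun_prop)]
    rfl
  rw [h1, hprod, ha, hb]
  ext s hs
  rw [Measure.map_apply (by fun_prop) hs, Measure.prod_apply (by measurability),
    PMF.toMeasure_bind_apply _ _ _ hs, lintegral_countable']
  refine tsum_congr fun n => ?_
  rw [PMF.toMeasure_apply_singleton _ _ (by measurability), mul_comm,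
    PMF.toMeasure_map_apply _ _ _ (by fun_prop) hs]
  rfl

lemma map_sum_iidSum {Ω : Type*} [MeasurableSpace Ω] (μ : Measure Ω) [IsProbabilityMeasure μ]
    {ι : Type*} (X : ι → Ω → ℕ) (hX : ∀ i, Measurable (X i)) (h : iIndepFun X μ)
    (a : PMF ℕ) (ha : ∀ i, μ.map (X i) = a.toMeasure) (s : Finset ι) :
    μ.map (∑ i ∈ s, X i) = (iidSum a s.card).toMeasure := by
  classical
  induction s using Finset.induction_on with
  | empty =>
    simp only [Finset.sum_empty, Finset.card_empty, iidSum, PMF.toMeasure_pure]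
    exact (Measure.map_const μ 0).trans (by simp)
  | insert i s hi ih =>
    rw [Finset.sum_insert hi, add_comm, Finset.card_insert_of_notMem hi]
    exact map_add_toMeasure μ (∑ j ∈ s, X j) _
      (by rw [Finset.sum_fn]; exact Finset.measurable_sum s fun i _ => hX i) (hX i)
      (h.indepFun_finsetSum_of_notMem hX hi) _ _ ih (ha i)

lemma iIndep_blocks {Ω : Type*} {m0 : MeasurableSpace Ω} (μ : Measure Ω) [IsProbabilityMeasure μ]
    {ι κ : Type*} (m : ι → MeasurableSpace Ω) (hm : ∀ i, m i ≤ m0) (h : iIndep m μ)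
    (T : κ → Set ι) (hT : ∀ a b, a ≠ b → Disjoint (T a) (T b)) :
    iIndep (fun a => ⨆ e ∈ T a, m e) μ := by
  classical
  rw [iIndep_iff]
  intro s
  induction s using Finset.induction_on with
  | empty => intro f _; simp
  | insert a s ha ih =>
    intro f hf
    rw [Finset.prod_insert ha, Finset.set_biInter_insert,
      ← ih fun i hi => hf i (Finset.mem_insert_of_mem hi)]
    have hd : Disjoint (T a) (⋃ b ∈ s, T b) := by
      simp only [Set.disjoint_iUnion_right]
      intro b hb
      exact hT a b (by rintro rfl; exact ha hb)
    have hi := indep_iSup_of_disjoint hm h hd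
    refine (Indep_iff _ _ μ).1 hi _ _ (hf a (Finset.mem_insert_self _ _)) ?_
    refine Finset.measurableSet_biInter s fun b hb => ?_
    have hle : (⨆ e ∈ T b, m e) ≤ ⨆ e ∈ ⋃ b ∈ s, T b, m e :=
      biSup_mono fun e he => Set.mem_biUnion (show b ∈ (s : Set κ) from hb) he
    exact hle _ (hf b (Finset.mem_insert_of_mem hb))

/-- If `F ~ SSBM(N,K,p,q)` conditional on `Y` and `B` is an `r`-homogeneous
measurement matrix with pairwise disjoint rows which is CO-1 with respect to `Y` (each profile
vector `a_i = b_i Yᵀ` is supported on the single community `x_i`), then the entries `C_{ij}`,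
`i > j`, of `C = B F Bᵀ` are mutually independent, with `C_{ij} ~ Binomial(r², p)` when
`x_i = x_j` and `C_{ij} ~ Binomial(r², q)` otherwise. -/
theorem coarsened_SSBM_CO1_entries_indep_binomial
    {N K M r : ℕ} (hr : 0 < r) (hrM : r * M ≤ N)
    (p q : ℝ≥0∞) (hp : p ≤ 1) (hq : q ≤ 1)
    -- the community assignment matrix `Y`
    (Y : Matrix (Fin K) (Fin N) ℕ)
    (hY01 : ∀ k u, Y k u = 0 ∨ Y k u = 1)
    (hYcol : ∀ u, ∃! k, Y k u = 1)
    -- the measurement matrix `B`, with pairwise disjoint `r`-homogeneous rows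
    (B : Matrix (Fin M) (Fin N) ℕ)
    (hB01 : ∀ i u, B i u = 0 ∨ B i u = 1)
    (hBdisj : ∀ i j, i ≠ j → ∀ u, B i u * B j u = 0)
    (hBhom : ∀ i, (Finset.univ.filter fun u => B i u ≠ 0).card = r)
    -- `B` is CO-1 with respect to `Y`, with profile vector `x`
    (hCO1 : ∀ i, ∃! k, (B * Y.transpose) i k ≠ 0)
    (x : Fin M → Fin K)
    (hx : ∀ i, (B * Y.transpose) i (x i) ≠ 0)
    -- the random adjacency matrix `F`, drawn from `SSBM(N,K,p,q)` conditional on `Y`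
    {Ω : Type*} [MeasurableSpace Ω] (μ : Measure Ω) [IsProbabilityMeasure μ]
    (F : Ω → Matrix (Fin N) (Fin N) ℕ)
    (hFmeas : ∀ u v, Measurable fun ω => F ω u v)
    (hFsymm : ∀ ω u v, F ω u v = F ω v u)
    (hFdiag : ∀ ω u, F ω u u = 0)
    (hF01 : ∀ ω u v, F ω u v = 0 ∨ F ω u v = 1)
    (hFindep : iIndepFun
      (fun (e : {e : Fin N × Fin N // e.1 < e.2}) ω => F ω e.1.1 e.1.2) μ)
    (hFlaw : ∀ u v : Fin N, u < v →
      μ.map (fun ω => F ω u v) =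
        (if ∃ k, Y k u = 1 ∧ Y k v = 1 then bernNat p hp else bernNat q hq).toMeasure) :
    -- conclusion: the entries `C_{ij}`, `i > j`, of `C = B F Bᵀ` are mutually independent …
    iIndepFun
        (fun (e : {e : Fin M × Fin M // e.2 < e.1}) ω =>
          (B * F ω * B.transpose) e.1.1 e.1.2) μ ∧
      -- … with `C_{ij} ~ Binomial(r², p)` if `x_i = x_j`, and `C_{ij} ~ Binomial(r², q)` else
      ∀ i j : Fin M, j < i →
        μ.map (fun ω => (B * F ω * B.transpose) i j) =
          (if x i = x j then binomialNat p hp (r ^ 2)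
            else binomialNat q hq (r ^ 2)).toMeasure := by
  have hdis : ∀ i j u, B i u ≠ 0 → B j u ≠ 0 → i = j := by
    intro i j u h1 h2
    by_contra hij
    have := hBdisj i j hij u
    simp_all
  have hS : ∀ i u, B i u ≠ 0 → Y (x i) u = 1 := by
    intro i u hu
    obtain ⟨k, hk, -⟩ := hYcol u
    have hne : (B * Y.transpose) i k ≠ 0 := by
      rw [Matrix.mul_apply]
      intro h0
      have := (Finset.sum_eq_zero_iff.1 h0) u (Finset.mem_univ _)
      simp [Matrix.transpose_apply, hk, hu] at this
    rw [(hCO1 i).unique (hx i) hne]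
    exact hk
  have hcond : ∀ i j u v, B i u ≠ 0 → B j v ≠ 0 →
      ((∃ k, Y k u = 1 ∧ Y k v = 1) ↔ x i = x j) := by
    intro i j u v hu hv
    constructor
    · rintro ⟨k, h1, h2⟩
      rw [(hYcol u).unique (hS i u hu) h1, (hYcol v).unique (hS j v hv) h2]
    · intro h
      exact ⟨x i, hS i u hu, h ▸ hS j v hv⟩
  have hC : ∀ ω i j, (B * F ω * B.transpose) i j =
      ∑ w : {w : Fin N × Fin N // B i w.1 ≠ 0 ∧ B j w.2 ≠ 0}, F ω w.1.1 w.1.2 := by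
    intro ω i j
    have h2 : ∑ w : {w : Fin N × Fin N // B i w.1 ≠ 0 ∧ B j w.2 ≠ 0}, F ω w.1.1 w.1.2 =
        ∑ w : Fin N × Fin N, if B i w.1 ≠ 0 ∧ B j w.2 ≠ 0 then F ω w.1 w.2 else 0 := by
      rw [← Finset.sum_filter]
      exact (Finset.sum_subtype (p := fun w : Fin N × Fin N => B i w.1 ≠ 0 ∧ B j w.2 ≠ 0) _
        (by simp) (fun w => F ω w.1 w.2)).symm
    rw [h2, Fintype.sum_prod_type_right, Matrix.mul_apply]
    refine Finset.sum_congr rfl fun v _ => ?_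
    rw [Matrix.mul_apply, Finset.sum_mul]
    refine Finset.sum_congr rfl fun u _ => ?_
    rw [Matrix.transpose_apply]
    rcases hB01 i u with h | h <;> rcases hB01 j v with h' | h' <;> simp [h, h']
  have hlaw : ∀ i j u v, i ≠ j → B i u ≠ 0 → B j v ≠ 0 → μ.map (fun ω => F ω u v) =
      (if x i = x j then bernNat p hp else bernNat q hq).toMeasure := by
    intro i j u v hij hu hv
    have huv : u ≠ v := by
      rintro rfl
      exact hij (hdis i j u hu hv)
    rcases lt_or_gt_of_ne huv with h | h
    · rw [hFlaw u v h]
      simp only [hcond i j u v hu hv]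
    · simp only [fun ω => hFsymm ω u v]
      rw [hFlaw v u h]
      simp only [hcond j i v u hv hu, eq_comm]
  constructor
  · let T : {e : Fin M × Fin M // e.2 < e.1} → Set {e : Fin N × Fin N // e.1 < e.2} := fun a =>
      {e | (B a.1.1 e.1.1 ≠ 0 ∧ B a.1.2 e.1.2 ≠ 0) ∨ (B a.1.1 e.1.2 ≠ 0 ∧ B a.1.2 e.1.1 ≠ 0)}
    have hT : ∀ a b, a ≠ b → Disjoint (T a) (T b) := by
      rintro ⟨⟨a1, a2⟩, ha⟩ ⟨⟨b1, b2⟩, hb⟩ hab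
      rw [Set.disjoint_left]
      rintro ⟨⟨u, v⟩, huv⟩ h1 h2
      apply hab
      simp only [T, Set.mem_ofPred_eq] at h1 h2 ha hb
      rcases h1 with ⟨h1, h1'⟩ | ⟨h1, h1'⟩ <;> rcases h2 with ⟨h2, h2'⟩ | ⟨h2, h2'⟩
      · simp [hdis _ _ _ h1 h2, hdis _ _ _ h1' h2']
      · have e1 := hdis _ _ _ h1 h2'
        have e2 := hdis _ _ _ h1' h2
        subst e1 e2
        exact absurd ha hb.asymm
      · have e1 := hdis _ _ _ h1 h2'
        have e2 := hdis _ _ _ h1' h2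
        subst e1 e2
        exact absurd ha hb.asymm
      · simp [hdis _ _ _ h1 h2, hdis _ _ _ h1' h2']
    have hI := iIndep_blocks μ _ (fun e => (hFmeas e.1.1 e.1.2).comap_le) hFindep.iIndep T hT
    refine (iIndepFun_iff_iIndep _ _ _).2 ?_
    rw [iIndep_iff] at hI ⊢
    intro s f hf
    refine hI s fun a ha => ?_
    refine (Measurable.comap_le (m₁ := ⨆ e ∈ T a, MeasurableSpace.comap
      (fun ω => F ω e.1.1 e.1.2) inferInstance) ?_) _ (hf a ha)
    simp only [hC]
    refine Finset.measurable_sum _ fun w _ => ?_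
    obtain ⟨⟨u, v⟩, hu, hv⟩ := w
    simp only at hu hv ⊢
    have huv : u ≠ v := by
      rintro rfl
      exact a.2.ne (hdis _ _ u hv hu)
    rcases lt_or_gt_of_ne huv with h | h
    · exact Measurable.of_comap_le (le_iSup₂_of_le
        (⟨(u, v), h⟩ : {e : Fin N × Fin N // e.1 < e.2}) (Or.inl ⟨hu, hv⟩) le_rfl)
    · simp only [fun ω => hFsymm ω u v]
      exact Measurable.of_comap_le (le_iSup₂_of_le
        (⟨(v, u), h⟩ : {e : Fin N × Fin N // e.1 < e.2}) (Or.inr ⟨hu, hv⟩) le_rfl)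
  · intro i j hji
    let ι := {w : Fin N × Fin N // B i w.1 ≠ 0 ∧ B j w.2 ≠ 0}
    have hne : ∀ w : ι, w.1.1 ≠ w.1.2 := by
      rintro ⟨⟨u, v⟩, hu, hv⟩ h
      simp only at hu hv h
      subst h
      exact hji.ne (hdis _ _ u hv hu)
    let g : ι → {e : Fin N × Fin N // e.1 < e.2} := fun w =>
      if h : w.1.1 < w.1.2 then ⟨w.1, h⟩
      else ⟨(w.1.2, w.1.1), lt_of_le_of_ne (not_lt.1 h) (hne w).symm⟩
    have hg : Function.Injective g := by
      rintro ⟨⟨u, v⟩, hu, hv⟩ ⟨⟨u', v'⟩, hu', hv'⟩ h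
      simp only at hu hv hu' hv'
      simp only [g] at h
      split_ifs at h <;> simp only [Subtype.mk.injEq, Prod.mk.injEq] at h <;>
        obtain ⟨rfl, rfl⟩ := h
      · rfl
      · exact absurd (hdis _ _ _ hv' hu) hji.ne
      · exact absurd (hdis _ _ _ hv' hu) hji.ne
      · rfl
    have hgF : ∀ w : ι, (fun ω => F ω (g w).1.1 (g w).1.2) = fun ω => F ω w.1.1 w.1.2 := by
      intro w
      funext ω
      simp only [g]
      split_ifs
      · rfl
      · exact hFsymm ω _ _
    have hI : iIndepFun (fun (w : ι) ω => F ω w.1.1 w.1.2) μ := by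
      have := hFindep.precomp hg
      have e0 : (fun (w : ι) ω => F ω w.1.1 w.1.2) =
          fun (w : ι) ω => F ω (g w).1.1 (g w).1.2 := funext fun w => (hgF w).symm
      rw [e0]
      exact this
    have hcard : (Finset.univ : Finset ι).card = r ^ 2 := by
      rw [Finset.card_univ, Fintype.card_subtype]
      have hp2 : (Finset.univ.filter fun w : Fin N × Fin N => B i w.1 ≠ 0 ∧ B j w.2 ≠ 0) =
          (Finset.univ.filter fun u => B i u ≠ 0) ×ˢ (Finset.univ.filter fun u => B j u ≠ 0) := by
        ext w
        simp
      rw [hp2, Finset.card_product, hBhom, hBhom, sq]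
    have key := map_sum_iidSum μ (fun (w : ι) ω => F ω w.1.1 w.1.2) (fun w => hFmeas _ _) hI _
      (fun w => hlaw i j w.1.1 w.1.2 hji.ne' w.2.1 w.2.2) Finset.univ
    rw [hcard] at key
    have e1 : (fun ω => (B * F ω * B.transpose) i j) =
        ∑ w : ι, fun ω => F ω w.1.1 w.1.2 := by
      funext ω
      rw [hC, Finset.sum_apply]
    rw [e1, key]
    unfold binomialNat
    split_ifs <;> rfl
end

section
/- Let F be drawn from SSBM(N,K,p,q) conditional on Y, let B be r-homogeneous with pairwise disjoint rows and balanced and CO-ν with respect to Y, let C = B F Bᵀ, and for 0 ≤ γ ≤ 1 let C̄ be the binarization C̄_{ij} = 1 if C_{ij} ≥ r²(γp + (1−γ)q) and C̄_{ij} = 0 otherwise. Then the entries {C̄_{ij} : i > j} are mutually independent, and each C̄_{ij} is Bernoulli with success probability U(a_i, a_j) := P( X ≥ r²(γp + (1−γ)q) ), where a_i = b_i Yᵀ and X ~ PoissonBinomial({p}^{a_i·a_j}, {q}^{r² − a_i·a_j}). -/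
open MeasureTheory ProbabilityTheory
open scoped ENNReal NNReal

lemma meas_sum {Ω ι : Type*} [MeasurableSpace Ω] {X : ι → Ω → ℕ} (hX : ∀ i, Measurable (X i))
    (S : Finset ι) : Measurable (∑ i ∈ S, X i) := by
  have : (∑ i ∈ S, X i) = fun ω => ∑ i ∈ S, X i ω := by ext ω; simp
  rw [this]
  exact Finset.measurable_sum _ fun i _ => hX i

lemma map_add_law {Ω : Type*} [MeasurableSpace Ω] {μ : Measure Ω} [IsProbabilityMeasure μ]
    {X Z : Ω → ℕ} (hX : Measurable X) (hZ : Measurable Z) (h : IndepFun X Z μ) (a b : PMF ℕ)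
    (ha : μ.map X = a.toMeasure) (hb : μ.map Z = b.toMeasure) :
    μ.map (X + Z) = (a.bind fun s => b.map fun t => s + t).toMeasure := by
  rw [h.map_add_eq_map_conv_map hX hZ, ha, hb]
  ext s hs
  rw [PMF.toMeasure_bind_apply _ _ _ hs, ← lintegral_indicator_one hs,
    Measure.lintegral_conv (by fun_prop), lintegral_countable']
  refine tsum_congr fun n => ?_
  rw [PMF.toMeasure_apply_singleton _ _ (MeasurableSet.singleton n), mul_comm,
    PMF.toMeasure_map_apply _ _ _ (by fun_prop) hs]
  congr 1
  rw [← lintegral_indicator_one (hs.preimage (by fun_prop))]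
  rfl

lemma iid_law {Ω ι : Type*} [MeasurableSpace Ω] {μ : Measure Ω} [IsProbabilityMeasure μ]
    {X : ι → Ω → ℕ} (hX : ∀ i, Measurable (X i)) (h : iIndepFun X μ) (a : PMF ℕ)
    (T : Finset ι) (ha : ∀ i ∈ T, μ.map (X i) = a.toMeasure) :
    μ.map (∑ i ∈ T, X i) = (iidSum a T.card).toMeasure := by
  classical
  induction T using Finset.induction_on with
  | empty =>
    simp only [Finset.sum_empty, Finset.card_empty, iidSum]
    rw [PMF.toMeasure_pure]
    change μ.map (fun _ => 0) = _
    rw [Measure.map_const]; simp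
  | insert i T hi ih =>
    rw [Finset.sum_insert hi, Finset.card_insert_of_notMem hi, add_comm, iidSum]
    refine map_add_law (meas_sum hX _) (hX i)
      (h.indepFun_finsetSum_of_notMem hX hi) _ _ (ih fun j hj => ha j (Finset.mem_insert_of_mem hj))
      (ha i (Finset.mem_insert_self _ _))

lemma pb_law {Ω ι : Type*} [MeasurableSpace Ω] {μ : Measure Ω} [IsProbabilityMeasure μ]
    {X : ι → Ω → ℕ} (hX : ∀ i, Measurable (X i)) (h : iIndepFun X μ)
    (p q : ℝ≥0∞) (hp : p ≤ 1) (hq : q ≤ 1) (P : ι → Prop) [DecidablePred P]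
    (S : Finset ι)
    (ha : ∀ i ∈ S, μ.map (X i) = (if P i then bernNat p hp else bernNat q hq).toMeasure) :
    μ.map (∑ i ∈ S, X i) =
      (poissonBinomial p q hp hq (S.filter P).card (S.filter fun i => ¬ P i).card).toMeasure := by
  classical
  rw [← Finset.sum_filter_add_sum_filter_not S P]
  refine map_add_law (meas_sum hX _)
    (meas_sum hX _) ?_ _ _ (iid_law hX h _ _ ?_) (iid_law hX h _ _ ?_)
  · have := h.indepFun_finset (S.filter P) (S.filter fun i => ¬ P i)
      (Finset.disjoint_filter_filter_not _ _ _) hX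
    have := this.comp (φ := fun g => ∑ i, g i) (ψ := fun g => ∑ i, g i)
      (by fun_prop) (by fun_prop)
    convert this using 1
    · ext ω; simp [Finset.sum_attach _ (fun i => X i ω)]
    · ext ω; simp [Function.comp_def]
      exact (Finset.sum_attach _ (fun i => X i ω)).symm
  · intro i hi
    rw [Finset.mem_filter] at hi
    rw [ha i hi.1, if_pos hi.2]
  · intro i hi
    rw [Finset.mem_filter] at hi
    rw [ha i hi.1, if_neg hi.2]

open Classical in
lemma bin_law {Ω : Type*} [MeasurableSpace Ω] {μ : Measure Ω} [IsProbabilityMeasure μ]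
    {X : Ω → ℕ} (hX : Measurable X) (a : PMF ℕ) (ha : μ.map X = a.toMeasure) (t : ℝ) (hle) :
    μ.map (fun ω => if t ≤ (X ω : ℝ) then (1 : ℕ) else 0) =
      (bernNat (a.toMeasure {n : ℕ | t ≤ (n : ℝ)}) hle).toMeasure := by
  have hA : MeasurableSet {n : ℕ | t ≤ (n : ℝ)} := .of_discrete
  have : (fun ω => if t ≤ (X ω : ℝ) then (1 : ℕ) else 0) =
    (fun n : ℕ => if t ≤ (n : ℝ) then (1 : ℕ) else 0) ∘ X := rfl
  rw [this, ← Measure.map_map .of_discrete hX, ha]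
  refine Measure.ext_of_singleton fun n => ?_
  rw [Measure.map_apply .of_discrete (.singleton _), bernNat,
    PMF.toMeasure_apply_singleton _ _ (.singleton _), PMF.map_apply, tsum_bool]
  rcases n with _ | _ | n
  · have : (fun n : ℕ => if t ≤ (n : ℝ) then (1 : ℕ) else 0) ⁻¹' {0} = {n : ℕ | t ≤ (n : ℝ)}ᶜ := by
      ext m; simp
    rw [this, prob_compl_eq_one_sub hA]
    simp
  · have : (fun n : ℕ => if t ≤ (n : ℝ) then (1 : ℕ) else 0) ⁻¹' {1} = {n : ℕ | t ≤ (n : ℝ)} := by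
      ext m; simp
    simp [this]
  · have : (fun n : ℕ => if t ≤ (n : ℝ) then (1 : ℕ) else 0) ⁻¹' {n + 1 + 1} = ∅ := by
      ext m
      by_cases h : t ≤ (m : ℝ) <;> simp [h]
    simp [this]

lemma indep_groups {Ω ι κ : Type*} [MeasurableSpace Ω] {μ : Measure Ω} [IsProbabilityMeasure μ]
    {X : ι → Ω → ℕ} (hX : ∀ i, Measurable (X i)) (h : iIndepFun X μ)
    (S : κ → Finset ι) (hS : ∀ k l, k ≠ l → Disjoint (S k) (S l)) (g : ℕ → ℕ) :
    iIndepFun (fun k ω => g (∑ i ∈ S k, X i ω)) μ := by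
  classical
  rw [iIndepFun_iff_measure_inter_preimage_eq_mul]
  intro T A hA
  induction T using Finset.induction_on with
  | empty => simp
  | insert k T hk ih =>
    rw [Finset.prod_insert hk, ← ih fun i hi => hA i (Finset.mem_insert_of_mem hi),
      Finset.set_biInter_insert]
    have hd : Disjoint (S k) (T.biUnion S) := by
      rw [Finset.disjoint_biUnion_right]
      intro l hl
      exact hS k l (fun e => hk (e ▸ hl))
    have hi := h.indepFun_finset _ _ hd hX
    have e1 : (fun ω => g (∑ i ∈ S k, X i ω)) ⁻¹' A k =
        (fun ω (i : S k) => X i ω) ⁻¹' {f | g (∑ i, f i) ∈ A k} := by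
      ext ω
      simp only [Set.mem_preimage, Set.mem_ofPred_eq]
      rw [← Finset.sum_coe_sort (S k) (fun i => X i ω)]
    have e2 : (⋂ l ∈ T, (fun ω => g (∑ i ∈ S l, X i ω)) ⁻¹' A l) =
        (fun ω (i : T.biUnion S) => X i ω) ⁻¹' {f | ∀ l ∈ T,
          g (∑ i ∈ S l, if hi : i ∈ T.biUnion S then f ⟨i, hi⟩ else 0) ∈ A l} := by
      ext ω
      simp only [Set.mem_preimage, Set.mem_ofPred_eq, Set.mem_iInter]
      refine forall₂_congr fun l hl => ?_
      rw [Finset.sum_congr rfl]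
      intro i hi
      rw [dif_pos (Finset.mem_biUnion.2 ⟨l, hl, hi⟩)]
    rw [e1, e2]
    exact hi.measure_inter_preimage_eq_mul _ _ .of_discrete .of_discrete

/-- the set of edges between the supports of rows `i` and `j` -/
def edgeSet {N M : ℕ} (B : Matrix (Fin M) (Fin N) ℕ) (i j : Fin M) :
    Finset {e : Fin N × Fin N // e.1 < e.2} :=
  Finset.univ.filter fun e => B i e.1.1 * B j e.1.2 + B i e.1.2 * B j e.1.1 ≠ 0

lemma sum_edges {N M : ℕ} (B : Matrix (Fin M) (Fin N) ℕ)
    (hB01 : ∀ i u, B i u = 0 ∨ B i u = 1)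
    (hBdisj : ∀ i j, i ≠ j → ∀ u, B i u * B j u = 0) (i j : Fin M) (hij : i ≠ j)
    (G : Matrix (Fin N) (Fin N) ℕ) (hG : ∀ u v, G u v = G v u) :
    (B * G * B.transpose) i j = ∑ e ∈ edgeSet B i j, G e.1.1 e.1.2 := by
  classical
  have h1 : (B * G * B.transpose) i j = ∑ x : Fin N × Fin N, B i x.1 * G x.1 x.2 * B j x.2 := by
    rw [Matrix.mul_apply, Fintype.sum_prod_type_right]
    refine Finset.sum_congr rfl fun v _ => ?_
    rw [Matrix.mul_apply, Finset.sum_mul]; rfl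
  have h2 : ∑ x : Fin N × Fin N, B i x.1 * G x.1 x.2 * B j x.2 =
      ∑ x : Fin N × Fin N, (if x.1 < x.2 then
        (B i x.1 * B j x.2 + B i x.2 * B j x.1) * G x.1 x.2 else 0) := by
    have h3 : ∀ x : Fin N × Fin N, B i x.1 * G x.1 x.2 * B j x.2 =
        (if x.1 < x.2 then B i x.1 * G x.1 x.2 * B j x.2 else 0) +
        (if x.2 < x.1 then B i x.1 * G x.1 x.2 * B j x.2 else 0) := by
      rintro ⟨u, v⟩
      rcases lt_trichotomy u v with h | h | h
      · simp [h, h.not_gt]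
      · subst h
        have := hBdisj i j hij u
        simp only [lt_irrefl, if_false]
        rw [mul_right_comm, this]; simp
      · simp [h, h.not_gt]
    rw [Finset.sum_congr rfl fun x _ => h3 x, Finset.sum_add_distrib,
      ← (Equiv.prodComm (Fin N) (Fin N)).sum_comp (fun x : Fin N × Fin N =>
        if x.2 < x.1 then B i x.1 * G x.1 x.2 * B j x.2 else 0), ← Finset.sum_add_distrib]
    refine Finset.sum_congr rfl ?_
    rintro ⟨u, v⟩ -
    change (if u < v then B i u * G u v * B j v else 0) +
      (if u < v then B i v * G v u * B j u else 0) =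
      (if u < v then (B i u * B j v + B i v * B j u) * G u v else 0)
    by_cases h : u < v
    · simp only [if_pos h]
      rw [hG v u]; ring
    · simp only [if_neg h]
  rw [h1, h2, ← Finset.sum_filter, edgeSet]
  rw [Finset.sum_subtype (p := fun e : Fin N × Fin N => e.1 < e.2)
      (Finset.univ.filter fun x : Fin N × Fin N => x.1 < x.2) (by simp)
      (fun x => (B i x.1 * B j x.2 + B i x.2 * B j x.1) * G x.1 x.2)]
  conv_rhs => rw [Finset.sum_filter]
  refine Finset.sum_congr rfl ?_
  rintro ⟨⟨u, v⟩, h⟩ -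
  have a1 := hBdisj i j hij u
  have a2 := hBdisj i j hij v
  rcases hB01 i u with b1 | b1 <;> rcases hB01 i v with b2 | b2 <;>
    rcases hB01 j u with b3 | b3 <;> rcases hB01 j v with b4 | b4 <;> simp_all

lemma edgeSet_disjoint {N M : ℕ} (B : Matrix (Fin M) (Fin N) ℕ)
    (hBdisj : ∀ i j, i ≠ j → ∀ u, B i u * B j u = 0)
    (k l : {e : Fin M × Fin M // e.2 < e.1}) (hkl : k ≠ l) :
    Disjoint (edgeSet B k.1.1 k.1.2) (edgeSet B l.1.1 l.1.2) := by
  rw [Finset.disjoint_left]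
  rintro ⟨⟨u, v⟩, h⟩ h1 h2
  apply hkl
  obtain ⟨⟨i, j⟩, hij⟩ := k
  obtain ⟨⟨i', j'⟩, hij'⟩ := l
  have key : ∀ a b w, B a w ≠ 0 → B b w ≠ 0 → a = b := by
    intro a b w ha hb
    by_contra hab
    exact (mul_ne_zero ha hb) (hBdisj a b hab w)
  simp only [edgeSet, Finset.mem_filter, Finset.mem_univ, true_and, ne_eq, Nat.add_eq_zero_iff,
    Nat.mul_eq_zero, not_and_or, not_or] at h1 h2 hij hij'
  rcases h1 with ⟨p1, p2⟩ | ⟨p1, p2⟩ <;> rcases h2 with ⟨q1, q2⟩ | ⟨q1, q2⟩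
  · have := key _ _ _ p1 q1; have := key _ _ _ p2 q2; subst_vars; rfl
  · have := key _ _ _ p1 q2; have := key _ _ _ p2 q1; subst_vars; exact absurd hij hij'.not_gt
  · have := key _ _ _ p1 q2; have := key _ _ _ p2 q1; subst_vars; exact absurd hij hij'.not_gt
  · have := key _ _ _ p1 q1; have := key _ _ _ p2 q2; subst_vars; rfl

open Classical in
/-- Binarizing the coarse matrix `C = B F Bᵀ` at the threshold
`r²(γp + (1−γ)q)` produces mutually independent entries (for `i > j`), each Bernoulli with
success probability `U(a_i,a_j) = P(X ≥ r²(γp + (1−γ)q))` for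
`X ~ PoissonBinomial({p}^{a_i·a_j}, {q}^{r²−a_i·a_j})`. -/
theorem coarsened_SSBM_binarized_entries_indep_bernoulli
    {N K M r ν : ℕ} (hr : 0 < r) (hrM : r * M ≤ N) (hν : 1 ≤ ν)
    (p q : ℝ) (hp0 : 0 ≤ p) (hp1 : p ≤ 1) (hq0 : 0 ≤ q) (hq1 : q ≤ 1)
    (γ : ℝ) (hγ0 : 0 ≤ γ) (hγ1 : γ ≤ 1)
    -- the community assignment matrix `Y`
    (Y : Matrix (Fin K) (Fin N) ℕ)
    (hY01 : ∀ k u, Y k u = 0 ∨ Y k u = 1)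
    (hYcol : ∀ u, ∃! k, Y k u = 1)
    -- the measurement matrix `B`, with pairwise disjoint `r`-homogeneous rows
    (B : Matrix (Fin M) (Fin N) ℕ)
    (hB01 : ∀ i u, B i u = 0 ∨ B i u = 1)
    (hBdisj : ∀ i j, i ≠ j → ∀ u, B i u * B j u = 0)
    (hBhom : ∀ i, (Finset.univ.filter fun u => B i u ≠ 0).card = r)
    -- `B` is CO-ν and balanced with respect to `Y`
    (hCO : ∀ i, 1 ≤ (Finset.univ.filter fun k => (B * Y.transpose) i k ≠ 0).card ∧
      (Finset.univ.filter fun k => (B * Y.transpose) i k ≠ 0).card ≤ ν)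
    (hbal : ∀ i k, (B * Y.transpose) i k ≠ 0 →
      (B * Y.transpose) i k *
        (Finset.univ.filter fun k' => (B * Y.transpose) i k' ≠ 0).card = r)
    -- the random adjacency matrix `F`, drawn from `SSBM(N,K,p,q)` conditional on `Y`
    {Ω : Type*} [MeasurableSpace Ω] (μ : Measure Ω) [IsProbabilityMeasure μ]
    (F : Ω → Matrix (Fin N) (Fin N) ℕ)
    (hFmeas : ∀ u v, Measurable fun ω => F ω u v)
    (hFsymm : ∀ ω u v, F ω u v = F ω v u)
    (hFdiag : ∀ ω u, F ω u u = 0)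
    (hF01 : ∀ ω u v, F ω u v = 0 ∨ F ω u v = 1)
    (hFindep : iIndepFun
      (fun (e : {e : Fin N × Fin N // e.1 < e.2}) ω => F ω e.1.1 e.1.2) μ)
    (hFlaw : ∀ u v : Fin N, u < v →
      μ.map (fun ω => F ω u v) =
        (if ∃ k, Y k u = 1 ∧ Y k v = 1 then
            bernNat (ENNReal.ofReal p) (ENNReal.ofReal_le_one.mpr hp1)
          else bernNat (ENNReal.ofReal q) (ENNReal.ofReal_le_one.mpr hq1)).toMeasure) :
    -- conclusion: the binarized entries `C̄_{ij}`, `i > j`, are mutually independent …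
    iIndepFun
        (fun (e : {e : Fin M × Fin M // e.2 < e.1}) ω =>
          if (r : ℝ) ^ 2 * (γ * p + (1 - γ) * q) ≤
              ((B * F ω * B.transpose) e.1.1 e.1.2 : ℝ) then (1 : ℕ) else 0) μ ∧
      -- … and `C̄_{ij}` is Bernoulli with success probability `U(a_i, a_j)`
      ∀ i j : Fin M, j < i →
        μ.map (fun ω =>
            if (r : ℝ) ^ 2 * (γ * p + (1 - γ) * q) ≤
                ((B * F ω * B.transpose) i j : ℝ) then (1 : ℕ) else 0) =
          (bernNat
              ((poissonBinomial (ENNReal.ofReal p) (ENNReal.ofReal q)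
                  (ENNReal.ofReal_le_one.mpr hp1) (ENNReal.ofReal_le_one.mpr hq1)
                  ((B * Y.transpose * (B * Y.transpose).transpose) i j)
                  (r ^ 2 - (B * Y.transpose * (B * Y.transpose).transpose) i j)).toMeasure
                {n : ℕ | (r : ℝ) ^ 2 * (γ * p + (1 - γ) * q) ≤ (n : ℝ)})
              prob_le_one).toMeasure := by
  have hX : ∀ e : {e : Fin N × Fin N // e.1 < e.2}, Measurable (fun ω => F ω e.1.1 e.1.2) :=
    fun e => hFmeas _ _
  have hC : ∀ i j, i ≠ j → ∀ ω, (B * F ω * B.transpose) i j =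
      ∑ e ∈ edgeSet B i j, F ω e.1.1 e.1.2 := fun i j hij ω =>
    sum_edges B hB01 hBdisj i j hij (F ω) (hFsymm ω)
  constructor
  · have := indep_groups hX hFindep (fun k : {e : Fin M × Fin M // e.2 < e.1} =>
      edgeSet B k.1.1 k.1.2) (edgeSet_disjoint B hBdisj)
      (fun n => if (r : ℝ) ^ 2 * (γ * p + (1 - γ) * q) ≤ (n : ℝ) then (1 : ℕ) else 0)
    convert this using 5 with k ω
    rw [hC _ _ k.2.ne']
  · intro i j hji
    have hij : i ≠ j := hji.ne'
    have hsum : ∀ ω, (B * F ω * B.transpose) i j =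
        (∑ e ∈ edgeSet B i j, fun ω => F ω e.1.1 e.1.2) ω := by
      intro ω; rw [hC _ _ hij, Finset.sum_apply]
    simp only [hsum]
    set P : {e : Fin N × Fin N // e.1 < e.2} → Prop :=
      fun e => ∃ k, Y k e.1.1 = 1 ∧ Y k e.1.2 = 1 with hP
    have hlaw := pb_law hX hFindep (ENNReal.ofReal p) (ENNReal.ofReal q)
      (ENNReal.ofReal_le_one.mpr hp1) (ENNReal.ofReal_le_one.mpr hq1) P (edgeSet B i j)
      (fun e _ => hFlaw _ _ e.2)
    have hcard : (edgeSet B i j).card = r ^ 2 := by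
      have h1 := sum_edges B hB01 hBdisj i j hij (Matrix.of fun _ _ => 1) (fun _ _ => rfl)
      have hr' : ∀ i, ∑ u, B i u = r := by
        intro i
        rw [← hBhom i, Finset.card_filter]
        refine Finset.sum_congr rfl fun u _ => ?_
        rcases hB01 i u with h | h <;> simp [h]
      simp only [Matrix.of_apply, Finset.sum_const, smul_eq_mul, mul_one] at h1
      rw [← h1, Matrix.mul_apply]
      simp only [Matrix.mul_apply, Matrix.of_apply, mul_one, hr', Matrix.transpose_apply]
      rw [← Finset.mul_sum, hr', sq]
    have hm : ((edgeSet B i j).filter P).card =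
        (B * Y.transpose * (B * Y.transpose).transpose) i j := by
      have h1 := sum_edges B hB01 hBdisj i j hij (Y.transpose * Y) (fun u v => by
        simp only [Matrix.mul_apply, Matrix.transpose_apply, mul_comm])
      rw [Matrix.transpose_mul, Matrix.transpose_transpose, ← Matrix.mul_assoc,
        Matrix.mul_assoc B, h1, Finset.card_filter]
      refine Finset.sum_congr rfl fun e _ => ?_
      obtain ⟨k, hk, hku⟩ := hYcol e.1.1
      rw [Matrix.mul_apply, Finset.sum_eq_single k]
      · simp only [Matrix.transpose_apply, hk, one_mul, hP]
        rcases hY01 k e.1.2 with h | h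
        · rw [h, if_neg]
          rintro ⟨k', h1, h2⟩
          rw [hku k' h1, h] at h2
          exact zero_ne_one h2
        · rw [h, if_pos ⟨k, hk, h⟩]
      · intro k' _ hk'
        rcases hY01 k' e.1.1 with h | h
        · simp [h]
        · exact absurd (hku k' h) hk'
      · simp
    have hk : ((edgeSet B i j).filter fun e => ¬ P e).card =
        r ^ 2 - (B * Y.transpose * (B * Y.transpose).transpose) i j := by
      rw [← hm, ← hcard, ← Finset.card_filter_add_card_filter_not (s := edgeSet B i j) P]
      omega
    rw [hm, hk] at hlaw
    exact bin_law (meas_sum hX _) _ hlaw _ _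
end

section
/- Let r be a positive integer, 0 < p < 1 and 0 < q < 1, let a, a' ∈ ℕ^K be profile vectors with 0 ≤ a·a' ≤ r², and let X be a sum of r² independent Bernoulli random variables of which a·a' have success probability p and r² − a·a' have success probability q. Set θ = (a/r)·(a'/r) = a·a'/r². Then for every 0 ≤ γ ≤ 1, the tail probability U = P( X ≥ r²(γp + (1−γ)q) ) satisfies | U − Φ( r(p−q)(θ−γ) / √( p(1−p)θ + q(1−q)(1−θ) ) ) | ≤ 0.7915 / ( r·√( p(1−p)θ + q(1−q)(1−θ) ) ), where Φ is the cumulative distribution function of the standard normal distribution. -/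
open MeasureTheory
open scoped ENNReal NNReal

/-- The standard normal cumulative distribution function
`Φ(x) = ∫_{−∞}^x e^{−t²/2}/√(2π) dt`. -/
noncomputable def stdNormalCDF (x : ℝ) : ℝ :=
  ∫ t in Set.Iic x, Real.exp (-t ^ 2 / 2) / Real.sqrt (2 * Real.pi)


lemma pb_taylor1 (x : ℝ) : ‖Complex.exp (Complex.I * x) - 1 - Complex.I * x‖ ≤ x ^ 2 / 2 := by
  have key := @image_norm_le_of_norm_deriv_right_le_deriv_boundary ℂ _ _
    (fun s : ℝ => Complex.exp (Complex.I * x * s) - 1 - Complex.I * x * s) 0 1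
    (fun s : ℝ => Complex.exp (Complex.I * x * s) * (Complex.I * x) - Complex.I * x)
    (by fun_prop) (by
      intro s _
      apply HasDerivAt.hasDerivWithinAt
      have h1 : HasDerivAt (fun s : ℝ => Complex.I * x * (s:ℂ)) (Complex.I * x) s := by
        simpa using (Complex.ofRealCLM.hasDerivAt (x := s)).const_mul (Complex.I * x)
      exact (h1.cexp.sub_const 1).sub h1)
    (fun s : ℝ => x ^ 2 * s ^ 2 / 2) (fun s => x ^ 2 * s) (by simp)
    (by
      intro s
      have := ((hasDerivAt_pow 2 s).const_mul (x^2)).div_const 2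
      convert! this using 1
      simp; ring)
    (by
      intro s hs
      have h2 : Complex.exp (Complex.I * x * s) * (Complex.I * x) - Complex.I * x
        = (Complex.exp (Complex.I * ((x * s : ℝ) : ℂ)) - 1) * (Complex.I * x) := by
        push_cast; ring_nf
      rw [h2, norm_mul]
      have h3 := @Real.norm_exp_I_mul_ofReal_sub_one_le (x * s)
      have h4 : ‖Complex.I * (x:ℂ)‖ = |x| := by simp
      rw [h4]
      calc _ ≤ ‖x * s‖ * |x| := by gcongr
        _ = x ^ 2 * s := by
          rw [Real.norm_eq_abs, abs_mul, abs_of_nonneg hs.1, ← sq_abs x]; ring)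
  have := key (show (1:ℝ) ∈ Set.Icc 0 1 by simp)
  simpa using this

lemma pb_taylor2 (x : ℝ) :
    ‖Complex.exp (Complex.I * x) - 1 - Complex.I * x + x ^ 2 / 2‖ ≤ |x| ^ 3 / 6 := by
  have key := @image_norm_le_of_norm_deriv_right_le_deriv_boundary ℂ _ _
    (fun s : ℝ => Complex.exp (Complex.I * x * s) - 1 - Complex.I * x * s - (Complex.I * x * s) ^ 2 / 2) 0 1
    (fun s : ℝ => Complex.exp (Complex.I * x * s) * (Complex.I * x) - Complex.I * x
      - (Complex.I * x * s) * (Complex.I * x))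
    (by fun_prop) (by
      intro s _
      apply HasDerivAt.hasDerivWithinAt
      have h1 : HasDerivAt (fun s : ℝ => Complex.I * x * (s:ℂ)) (Complex.I * x) s := by
        simpa using (Complex.ofRealCLM.hasDerivAt (x := s)).const_mul (Complex.I * x)
      convert! ((h1.cexp.sub_const 1).sub h1).sub ((h1.pow 2).div_const 2) using 1
      simp; ring)
    (fun s : ℝ => |x| ^ 3 * s ^ 3 / 6) (fun s => |x| ^ 3 * s ^ 2 / 2) (by simp)
    (by
      intro s
      have := ((hasDerivAt_pow 3 s).const_mul (|x|^3)).div_const 6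
      convert! this using 1
      simp; ring)
    (by
      intro s hs
      have h2 : Complex.exp (Complex.I * x * s) * (Complex.I * x) - Complex.I * x
          - (Complex.I * x * s) * (Complex.I * x)
        = (Complex.exp (Complex.I * ((x * s : ℝ) : ℂ)) - 1 - Complex.I * ((x * s : ℝ) : ℂ)) * (Complex.I * x) := by
        push_cast; ring_nf
      rw [h2, norm_mul]
      have h3 := pb_taylor1 (x * s)
      have h4 : ‖Complex.I * (x:ℂ)‖ = |x| := by simp
      rw [h4]
      calc _ ≤ ((x * s) ^ 2 / 2) * |x| := by gcongr
        _ = _ := by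
          rw [mul_pow, ← sq_abs x]; ring)
  have := key (show (1:ℝ) ∈ Set.Icc 0 1 by simp)
  simp only [Complex.ofReal_one, mul_one, one_pow] at this
  refine le_trans (le_of_eq ?_) this
  congr 1
  rw [mul_pow, Complex.I_sq]; ring

lemma pb_exp_quad {u : ℝ} (hu : 0 ≤ u) : |Real.exp (-u) - 1 + u| ≤ u ^ 2 / 2 := by
  have h1 := Real.quadratic_le_exp_of_nonneg hu
  have h2 := Real.add_one_le_exp (-u)
  have h3 : Real.exp (-u) * Real.exp u = 1 := by rw [← Real.exp_add]; simp
  have h4 := Real.exp_pos (-u)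
  rw [abs_le]
  constructor
  · nlinarith [sq_nonneg u]
  · by_contra hc
    push Not at hc
    have h5 : 1 - u + u ^ 2 / 2 < Real.exp (-u) := by linarith
    have h6 : (1 - u + u ^ 2 / 2) * (1 + u + u ^ 2 / 2) < 1 := by
      calc _ < Real.exp (-u) * (1 + u + u ^ 2 / 2) := by
            apply mul_lt_mul_of_pos_right h5; positivity
        _ ≤ Real.exp (-u) * Real.exp u := by gcongr
        _ = 1 := h3
    nlinarith [sq_nonneg (u ^ 2)]

/-- Centered characteristic function of a Bernoulli variable. -/
noncomputable def pbChar (p t : ℝ) : ℂ :=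
  (1 - p + p * Complex.exp (Complex.I * t)) * Complex.exp (-(Complex.I * (p * t : ℝ)))

lemma pbChar_sub {p t : ℝ} (hp0 : 0 ≤ p) (hp1 : p ≤ 1) (ht0 : 0 ≤ t) (ht2 : t ≤ 2) :
    ‖pbChar p t - (Real.exp (-(p * (1 - p) * t ^ 2 / 2)) : ℂ)‖ ≤ p * (1 - p) * (t ^ 3 / 6) := by
  set v := p * (1 - p) with hv
  have hv0 : 0 ≤ v := mul_nonneg hp0 (by linarith)
  have hv4 : v ≤ 1 / 4 := by nlinarith [sq_nonneg (p - 1/2)]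
  have e1 := pb_taylor2 (-(p * t))
  have e2 := pb_taylor2 ((1 - p) * t)
  have e3 := pb_exp_quad (u := v * t ^ 2 / 2) (by positivity)
  have id1 : pbChar p t - (Real.exp (-(v * t ^ 2 / 2)) : ℂ) =
      ((1 - p : ℝ) : ℂ) * (Complex.exp (Complex.I * (-(p * t) : ℝ)) - 1 - Complex.I * (-(p * t) : ℝ) + ((-(p * t) : ℝ) : ℂ) ^ 2 / 2)
      + (p : ℂ) * (Complex.exp (Complex.I * ((1 - p) * t : ℝ)) - 1 - Complex.I * ((1 - p) * t : ℝ) + (((1 - p) * t : ℝ) : ℂ) ^ 2 / 2)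
      - ((Real.exp (-(v * t ^ 2 / 2)) - 1 + v * t ^ 2 / 2 : ℝ) : ℂ) := by
    have h : Complex.exp (Complex.I * ((1 - p) * t : ℝ)) = Complex.exp (Complex.I * t) * Complex.exp (-(Complex.I * (p * t : ℝ))) := by
      rw [← Complex.exp_add]; congr 1; push_cast; ring
    have h' : Complex.exp (Complex.I * (-(p * t) : ℝ)) = Complex.exp (-(Complex.I * (p * t : ℝ))) := by
      congr 1; push_cast; ring
    rw [h, h', pbChar, hv]
    generalize Complex.exp (Complex.I * t) = A
    generalize Complex.exp (-(Complex.I * (p * t : ℝ))) = B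
    push_cast
    ring
  rw [id1]
  have n1 : ‖((1 - p : ℝ) : ℂ)‖ = 1 - p := by rw [Complex.norm_real, Real.norm_of_nonneg]; linarith
  have n2 : ‖(p : ℂ)‖ = p := by rw [Complex.norm_real, Real.norm_of_nonneg hp0]
  refine (norm_sub_le _ _).trans ?_
  refine (add_le_add_left (norm_add_le _ _) _).trans ?_
  rw [norm_mul, norm_mul, n1, n2, Complex.norm_real, Real.norm_eq_abs]
  rw [abs_neg, abs_of_nonneg (by positivity)] at e1
  rw [abs_of_nonneg (mul_nonneg (by linarith) ht0)] at e2
  have f1 := mul_le_mul_of_nonneg_left e1 (show 0 ≤ 1 - p by linarith)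
  have f2 := mul_le_mul_of_nonneg_left e2 hp0
  have f3 : (1 - p) * ((p * t) ^ 3 / 6) + p * (((1 - p) * t) ^ 3 / 6) + (v * t ^ 2 / 2) ^ 2 / 2
     = v * (t ^ 3 / 6) * (1 - 2 * v + 3 * v * t / 4) := by rw [hv]; ring
  have f4 : v * (t ^ 3 / 6) * (1 - 2 * v + 3 * v * t / 4) ≤ v * (t ^ 3 / 6) * 1 := by
    apply mul_le_mul_of_nonneg_left _ (by positivity)
    nlinarith
  linarith

lemma pbChar_norm {p t : ℝ} (hp0 : 0 ≤ p) (hp1 : p ≤ 1) :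
    ‖pbChar p t‖ ≤ Real.exp (-(2 * (p * (1 - p)) * Real.sin (t / 2) ^ 2)) := by
  have h0 : ‖Complex.exp (-(Complex.I * (p * t : ℝ)))‖ = 1 := by
    have : -(Complex.I * ((p * t : ℝ) : ℂ)) = Complex.I * ((-(p * t) : ℝ) : ℂ) := by push_cast; ring
    rw [this, Complex.norm_exp_I_mul_ofReal]
  rw [pbChar, norm_mul, h0, mul_one]
  apply le_of_sq_le_sq _ (Real.exp_pos _).le
  rw [← Complex.normSq_eq_norm_sq, ← Real.exp_nat_mul]
  have h1 : (1 - p + p * Complex.exp (Complex.I * t) : ℂ) = ((1 - p + p * Real.cos t : ℝ) : ℂ) + ((p * Real.sin t : ℝ) : ℂ) * Complex.I := by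
    rw [mul_comm Complex.I, Complex.exp_mul_I]; push_cast; ring
  rw [h1, Complex.normSq_add_mul_I]
  have h2 : Real.cos t = 1 - 2 * Real.sin (t / 2) ^ 2 := by
    have := Real.cos_sq' (t/2)
    have h3 := Real.cos_two_mul (t/2)
    rw [show 2 * (t / 2) = t by ring] at h3
    rw [h3, this]; ring
  have h3 := Real.sin_sq_add_cos_sq t
  have h4 := Real.add_one_le_exp (((2:ℕ):ℝ) * -(2 * (p * (1 - p)) * Real.sin (t / 2) ^ 2))
  refine le_trans (le_of_eq ?_) h4
  have : (1 - p + p * Real.cos t) ^ 2 + (p * Real.sin t) ^ 2 = (1-p)^2 + 2 * p * (1-p) * Real.cos t + p ^ 2 * (Real.sin t ^ 2 + Real.cos t ^ 2) := by ring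
  rw [this, h3, h2]; push_cast; ring

lemma pb_combine {C d1 d2 π1 π2 : ℝ} {A P a Q : ℂ}
    (hP : ‖P‖ ≤ π1) (ha : ‖a‖ ≤ π2) 
    (h1 : ‖P - Q‖ ≤ C * d1 * π1) (h2 : ‖A - a‖ ≤ C * d2 * π2) :
    ‖A * P - a * Q‖ ≤ C * (d2 + d1) * (π2 * π1) := by
  have : A * P - a * Q = (A - a) * P + a * (P - Q) := by ring
  rw [this]
  refine (norm_add_le _ _).trans ?_
  rw [norm_mul, norm_mul]
  have := mul_le_mul h2 hP (norm_nonneg _) ((norm_nonneg _).trans h2)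
  have := mul_le_mul ha h1 (norm_nonneg _) ((norm_nonneg _).trans ha)
  linarith

lemma pb_pow {C d α : ℝ} {A a : ℂ} (hA : ‖A‖ ≤ α) (ha : ‖a‖ ≤ α) (h : ‖A - a‖ ≤ C * d * α) (n : ℕ) :
    ‖A ^ n‖ ≤ α ^ n ∧ ‖a ^ n‖ ≤ α ^ n ∧ ‖A ^ n - a ^ n‖ ≤ C * (n * d) * α ^ n := by
  refine ⟨by rw [norm_pow]; gcongr, by rw [norm_pow]; gcongr, ?_⟩
  induction n with
  | zero => simp
  | succ n ih =>
    have := pb_combine (d1 := n * d) (d2 := d) (by rw [norm_pow]; gcongr : ‖A ^ n‖ ≤ α ^ n) ha ih h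
    rw [pow_succ', pow_succ', pow_succ']
    refine this.trans (le_of_eq ?_)
    push_cast; ring

lemma pb_gauss_norm {v t : ℝ} (hv : 0 ≤ v) :
    ‖((Real.exp (-(v * t ^ 2 / 2)) : ℝ) : ℂ)‖ ≤ Real.exp (-(2 * v * Real.sin (t / 2) ^ 2)) := by
  rw [Complex.norm_real, Real.norm_of_nonneg (Real.exp_pos _).le]
  apply Real.exp_le_exp.mpr
  have : Real.sin (t/2) ^ 2 ≤ (t/2) ^ 2 := sq_le_sq.mpr Real.abs_sin_le_abs
  nlinarith

lemma pb_char_bound {p q t : ℝ} (hp0 : 0 ≤ p) (hp1 : p ≤ 1) (hq0 : 0 ≤ q) (hq1 : q ≤ 1)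
    (m l : ℕ) {s : ℝ} (hs : s = m * (p * (1 - p)) + l * (q * (1 - q))) :
    ‖pbChar p t ^ m * pbChar q t ^ l‖ ≤ Real.exp (-(2 * s * Real.sin (t / 2) ^ 2)) ∧
    (0 ≤ t → t ≤ 2 → ‖pbChar p t ^ m * pbChar q t ^ l - (Real.exp (-(s * t ^ 2 / 2)) : ℝ)‖ ≤
      Real.exp (1 / 2) * (s * (t ^ 3 / 6)) * Real.exp (-(2 * s * Real.sin (t / 2) ^ 2))) := by
  have hE : Real.exp (-(2 * (p * (1 - p)) * Real.sin (t / 2) ^ 2)) ^ m *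
      Real.exp (-(2 * (q * (1 - q)) * Real.sin (t / 2) ^ 2)) ^ l = Real.exp (-(2 * s * Real.sin (t / 2) ^ 2)) := by
    rw [← Real.exp_nat_mul, ← Real.exp_nat_mul, ← Real.exp_add, hs]; congr 1; ring
  have hA : ∀ (x : ℝ), 0 ≤ x → x ≤ 1 → 0 ≤ t → t ≤ 2 → ‖pbChar x t - ((Real.exp (-(x * (1 - x) * t ^ 2 / 2)) : ℝ) : ℂ)‖
      ≤ Real.exp (1 / 2) * (x * (1 - x) * (t ^ 3 / 6)) * Real.exp (-(2 * (x * (1 - x)) * Real.sin (t / 2) ^ 2)) := by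
    intro x hx0 hx1 ht0 ht2
    have h1 := pbChar_sub hx0 hx1 ht0 ht2
    refine h1.trans ?_
    have h2 : 1 ≤ Real.exp (1 / 2) * Real.exp (-(2 * (x * (1 - x)) * Real.sin (t / 2) ^ 2)) := by
      rw [← Real.exp_add]
      apply Real.one_le_exp
      have h3 := Real.sin_sq_le_one (t/2)
      have h4 := sq_nonneg (Real.sin (t/2))
      have h5 : x * (1 - x) ≤ 1/4 := by nlinarith [sq_nonneg (x - 1/2)]
      nlinarith
    have h3 : 0 ≤ x * (1 - x) * (t ^ 3 / 6) := by
      have : 0 ≤ 1 - x := by linarith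
      positivity
    calc x * (1 - x) * (t ^ 3 / 6) = x * (1 - x) * (t ^ 3 / 6) * 1 := by ring
      _ ≤ x * (1 - x) * (t ^ 3 / 6) * (Real.exp (1 / 2) * Real.exp (-(2 * (x * (1 - x)) * Real.sin (t / 2) ^ 2))) := by gcongr
      _ = _ := by ring
  have vp : 0 ≤ p * (1 - p) := mul_nonneg hp0 (by linarith)
  have vq : 0 ≤ q * (1 - q) := mul_nonneg hq0 (by linarith)
  constructor
  · rw [← hE, norm_mul, norm_pow, norm_pow]
    gcongr
    · exact pbChar_norm hp0 hp1
    · exact pbChar_norm hq0 hq1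
  · intro ht0 ht2
    have P := pb_pow (pbChar_norm hp0 hp1) (pb_gauss_norm vp) (hA p hp0 hp1 ht0 ht2) m
    have Q := pb_pow (pbChar_norm hq0 hq1) (pb_gauss_norm vq) (hA q hq0 hq1 ht0 ht2) l
    have := pb_combine Q.1 P.2.1 Q.2.2 P.2.2
    rw [hE] at this
    have e : ((Real.exp (-(s * t ^ 2 / 2)) : ℝ) : ℂ) = ((Real.exp (-(p * (1 - p) * t ^ 2 / 2)) : ℝ) : ℂ) ^ m *
       ((Real.exp (-(q * (1 - q) * t ^ 2 / 2)) : ℝ) : ℂ) ^ l := by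
      rw [← Complex.ofReal_pow, ← Complex.ofReal_pow, ← Complex.ofReal_mul, ← Real.exp_nat_mul, ← Real.exp_nat_mul,
        ← Real.exp_add, hs]
      congr 2; ring
    rw [e]
    refine this.trans (le_of_eq ?_)
    rw [hs]; ring

lemma pb_gauss_int : Integrable (fun t : ℝ => Real.exp (-t ^ 2 / 2)) := by
  have := integrable_exp_neg_mul_sq (b := 1/2) (by norm_num)
  refine this.congr (Filter.Eventually.of_forall fun t => ?_)
  simp only; congr 1; ring

lemma pb_gauss_int' {s : ℝ} (hs : 0 < s) : Integrable (fun t : ℝ => Real.exp (-(s * t ^ 2 / 2))) := by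
  have := integrable_exp_neg_mul_sq (b := s/2) (by linarith)
  refine this.congr (Filter.Eventually.of_forall fun t => ?_)
  simp only; congr 1; ring

lemma pb_sqrt2pi_pos : 0 < Real.sqrt (2 * Real.pi) := Real.sqrt_pos.mpr (by positivity)

lemma pb_gauss_Ioi : ∫ t in Set.Ioi (0:ℝ), Real.exp (-t ^ 2 / 2) = Real.sqrt (2 * Real.pi) / 2 := by
  have := integral_gaussian_Ioi (1/2)
  rw [show Real.pi / (1/2) = 2 * Real.pi by ring] at this
  rw [← this]; congr 1; ext t; congr 1; ring

lemma pb_cdf_zero : stdNormalCDF 0 = 1 / 2 := by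
  unfold stdNormalCDF
  have := integral_comp_neg_Iic (0:ℝ) (fun t => Real.exp (-t ^ 2 / 2) / Real.sqrt (2 * Real.pi))
  simp only [neg_sq, neg_zero] at this
  rw [this, integral_div, pb_gauss_Ioi]
  field_simp [pb_sqrt2pi_pos.ne']

lemma pb_cdf_sub (x : ℝ) : stdNormalCDF x =
    1 / 2 + ∫ t in (0:ℝ)..x, Real.exp (-t ^ 2 / 2) / Real.sqrt (2 * Real.pi) := by
  have := intervalIntegral.integral_Iic_sub_Iic (μ := volume) (a := 0) (b := x)
    (f := fun t => Real.exp (-t ^ 2 / 2) / Real.sqrt (2 * Real.pi))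
    (pb_gauss_int.div_const _).integrableOn (pb_gauss_int.div_const _).integrableOn
  rw [← this, ← pb_cdf_zero]; unfold stdNormalCDF; ring

lemma pb_cdf_deriv (x : ℝ) :
    HasDerivAt stdNormalCDF (Real.exp (-x ^ 2 / 2) / Real.sqrt (2 * Real.pi)) x := by
  have h : stdNormalCDF = fun x => 1 / 2 + ∫ t in (0:ℝ)..x, Real.exp (-t ^ 2 / 2) / Real.sqrt (2 * Real.pi) :=
    funext pb_cdf_sub
  rw [h]
  apply HasDerivAt.const_add
  have hc : Continuous (fun t : ℝ => Real.exp (-t ^ 2 / 2) / Real.sqrt (2 * Real.pi)) := by fun_prop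
  exact intervalIntegral.integral_hasDerivAt_right (hc.intervalIntegrable _ _)
    hc.stronglyMeasurable.stronglyMeasurableAtFilter hc.continuousAt

lemma pb_cdf_nonneg (x : ℝ) : 0 ≤ stdNormalCDF x :=
  integral_nonneg fun t => by positivity

lemma pb_cdf_le_one (x : ℝ) : stdNormalCDF x ≤ 1 := by
  have h1 : stdNormalCDF x ≤ ∫ t, Real.exp (-t ^ 2 / 2) / Real.sqrt (2 * Real.pi) :=
    setIntegral_le_integral (pb_gauss_int.div_const _) (Filter.Eventually.of_forall fun t => by
      simp only [Pi.zero_apply]; positivity)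
  have h2 := integral_gaussian (1/2)
  rw [show Real.pi / (1/2) = 2 * Real.pi by ring] at h2
  have h3 : ∫ t, Real.exp (-t ^ 2 / 2) / Real.sqrt (2 * Real.pi) = 1 := by
    rw [integral_div, div_eq_one_iff_eq pb_sqrt2pi_pos.ne', ← h2]
    congr 1; ext t; congr 1; ring
  linarith

lemma pb_cdf_lip (x y : ℝ) : |stdNormalCDF x - stdNormalCDF y| ≤ 0.4 * |x - y| := by
  have := Convex.norm_image_sub_le_of_norm_hasDerivWithin_le (f := stdNormalCDF)
    (f' := fun x => Real.exp (-x ^ 2 / 2) / Real.sqrt (2 * Real.pi)) (C := 0.4) (s := Set.univ) (x := y) (y := x)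
    (fun z _ => (pb_cdf_deriv z).hasDerivWithinAt) (by
      intro z _
      rw [Real.norm_of_nonneg (by positivity), div_le_iff₀ pb_sqrt2pi_pos]
      have h1 : Real.exp (-z ^ 2 / 2) ≤ 1 := Real.exp_le_one_iff.mpr (by nlinarith [sq_nonneg z])
      have h2 : 2.5 ≤ Real.sqrt (2 * Real.pi) := by
        apply Real.le_sqrt_of_sq_le
        have := Real.pi_gt_d2
        norm_num at this ⊢; linarith
      linarith) convex_univ (Set.mem_univ _) (Set.mem_univ _)
  simpa [Real.norm_eq_abs] using this

lemma pb_sinc_bound (y t : ℝ) : |Real.sin (y * t) / t| ≤ |y| := by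
  rcases eq_or_ne t 0 with rfl | ht
  · simp
  · rw [abs_div, div_le_iff₀ (abs_pos.mpr ht), ← abs_mul]
    exact Real.abs_sin_le_abs

lemma pb_sinc_meas (y : ℝ) : Measurable (fun t : ℝ => Real.sin (y * t) / t) := by fun_prop

lemma pb_sinc_int {s : ℝ} (hs : 0 < s) (y : ℝ) : Integrable (fun t : ℝ => Real.exp (-(s * t ^ 2 / 2)) * (Real.sin (y * t) / t)) := by
  refine Integrable.mono' ((pb_gauss_int' hs).mul_const |y|) (by 
    apply Measurable.aestronglyMeasurable; fun_prop) (Filter.Eventually.of_forall fun t => ?_)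
  rw [norm_mul, Real.norm_of_nonneg (Real.exp_pos _).le]
  gcongr
  exact pb_sinc_bound y t

lemma pb_cos_gauss (y : ℝ) : ∫ t in Set.Ioi (0:ℝ), Real.exp (-(1 * t ^ 2 / 2)) * Real.cos (y * t) =
    Real.sqrt (2 * Real.pi) / 2 * Real.exp (-y ^ 2 / 2) := by
  have h := fourierIntegral_gaussian (b := 1/2) (by norm_num) (y : ℂ)
  have h2 := congrArg Complex.re h
  have hint : Integrable (fun x : ℝ => Complex.exp (Complex.I * y * x) * Complex.exp (-(1/2) * x ^ 2)) := by
    have := integrable_cexp_quadratic (b := 1/2) (by norm_num) (Complex.I * y) 0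
    refine this.congr (Filter.Eventually.of_forall fun t => ?_)
    simp only; rw [← Complex.exp_add]; congr 1; ring
  have e1 : ∀ x : ℝ, (Complex.exp (Complex.I * y * x) * Complex.exp (-(1/2) * x ^ 2)).re
      = (fun t => Real.exp (-(1 * t ^ 2 / 2)) * Real.cos (y * t)) |x| := by
    intro x
    have a1 : Complex.I * y * x = ((y * x : ℝ) : ℂ) * Complex.I := by push_cast; ring
    have a2 : (-(1/2) * x ^ 2 : ℂ) = ((-(1 * x ^ 2 / 2) : ℝ) : ℂ) := by push_cast; ring
    rw [a1, a2, ← Complex.ofReal_exp, Complex.re_mul_ofReal, Complex.exp_ofReal_mul_I_re]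
    simp only [sq_abs]
    rw [mul_comm]
    congr 1
    rcases abs_choice x with h | h <;> rw [h]
    rw [mul_neg, Real.cos_neg]
  have e2 : (∫ x : ℝ, Complex.exp (Complex.I * y * x) * Complex.exp (-(1/2) * x ^ 2)).re
      = ∫ x : ℝ, (Complex.exp (Complex.I * y * x) * Complex.exp (-(1/2) * x ^ 2)).re := by
    have := integral_re hint (𝕜 := ℂ)
    simpa using this.symm
  rw [e2] at h2
  simp_rw [e1] at h2
  rw [integral_comp_abs (f := fun t => Real.exp (-(1 * t ^ 2 / 2)) * Real.cos (y * t))] at h2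
  have e3 : ((Real.pi / (1/2) : ℂ) ^ (1 / 2 : ℂ) * Complex.exp (-(y:ℂ) ^ 2 / (4 * (1/2)))).re
     = Real.sqrt (2 * Real.pi) * Real.exp (-y ^ 2 / 2) := by
    have a1 : (Real.pi / (1/2) : ℂ) = ((2 * Real.pi : ℝ) : ℂ) := by push_cast; ring
    have a2 : (-(y:ℂ) ^ 2 / (4 * (1/2))) = ((-y ^ 2 / 2 : ℝ) : ℂ) := by push_cast; ring
    have a3 : (1 / 2 : ℂ) = ((1 / 2 : ℝ) : ℂ) := by push_cast; ring
    rw [a1, a2, a3, ← Complex.ofReal_exp, ← Complex.ofReal_cpow (by positivity), ← Complex.ofReal_mul,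
      Complex.ofReal_re, Real.sqrt_eq_rpow]
  rw [e3] at h2
  linarith

lemma pb_cdf_inv (y : ℝ) : stdNormalCDF y =
    1 / 2 + (1 / Real.pi) * ∫ t in Set.Ioi (0:ℝ), Real.exp (-(1 * t ^ 2 / 2)) * (Real.sin (y * t) / t) := by
  set F : ℝ → ℝ := fun y => ∫ t in Set.Ioi (0:ℝ), Real.exp (-(1 * t ^ 2 / 2)) * (Real.sin (y * t) / t) with hF
  have hd : ∀ y, HasDerivAt F (Real.sqrt (2 * Real.pi) / 2 * Real.exp (-y ^ 2 / 2)) y := by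
    intro y
    rw [← pb_cos_gauss y]
    refine (hasDerivAt_integral_of_dominated_loc_of_deriv_le (s := Set.univ) (bound := fun t => Real.exp (-(1 * t ^ 2 / 2)))
      (F' := fun y t => Real.exp (-(1 * t ^ 2 / 2)) * Real.cos (y * t)) Filter.univ_mem ?_ ?_ ?_ ?_ ?_ ?_).2
    · exact Filter.Eventually.of_forall fun x => (pb_sinc_int one_pos x).aestronglyMeasurable.restrict
    · exact (pb_sinc_int one_pos y).integrableOn
    · apply Continuous.aestronglyMeasurable; fun_prop
    · refine Filter.Eventually.of_forall fun t x _ => ?_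
      rw [norm_mul, Real.norm_of_nonneg (Real.exp_pos _).le]
      exact mul_le_of_le_one_right (Real.exp_pos _).le (Real.abs_cos_le_one _)
    · exact (pb_gauss_int' one_pos).integrableOn
    · refine (ae_restrict_iff' measurableSet_Ioi).mpr (Filter.Eventually.of_forall fun t ht x _ => ?_)
      have ht' : t ≠ 0 := ne_of_gt ht
      apply HasDerivAt.const_mul
      have h1 : HasDerivAt (fun x : ℝ => x * t) t x := by simpa using (hasDerivAt_id x).mul_const t
      have h2 := (h1.sin).div_const t
      rwa [mul_div_cancel_right₀ _ ht'] at h2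
  have hd2 : ∀ y, HasDerivAt (fun y => stdNormalCDF y - (1 / Real.pi) * F y) 0 y := by
    intro y
    have := (pb_cdf_deriv y).sub ((hd y).const_mul (1 / Real.pi))
    convert! this using 1
    have h2 : Real.sqrt (2 * Real.pi) * Real.sqrt (2 * Real.pi) = 2 * Real.pi := Real.mul_self_sqrt (by positivity)
    have h3 := pb_sqrt2pi_pos
    have h4 : 1 / Real.pi * (Real.sqrt (2 * Real.pi) / 2 * Real.exp (-y ^ 2 / 2)) =
      Real.exp (-y ^ 2 / 2) / Real.sqrt (2 * Real.pi) := by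
      have := Real.pi_pos
      rw [eq_div_iff h3.ne']
      calc _ = Real.sqrt (2 * Real.pi) * Real.sqrt (2 * Real.pi) / (2 * Real.pi) * Real.exp (-y ^ 2 / 2) := by
            field_simp
        _ = _ := by rw [h2, div_self (by positivity), one_mul]
    rw [h4, sub_self]
  have hc := is_const_of_deriv_eq_zero (f := fun y => stdNormalCDF y - (1 / Real.pi) * F y)
    (fun y => (hd2 y).differentiableAt) (fun y => (hd2 y).deriv) y 0
  have hF0 : F 0 = 0 := by simp [hF]
  simp only [hF0, pb_cdf_zero] at hc
  linarith

lemma pb_cdf_inv' {σ : ℝ} (hσ : 0 < σ) (y : ℝ) : stdNormalCDF (y / σ) =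
    1 / 2 + (1 / Real.pi) * ∫ t in Set.Ioi (0:ℝ), Real.exp (-(σ ^ 2 * t ^ 2 / 2)) * (Real.sin (y * t) / t) := by
  rw [pb_cdf_inv]
  congr 2
  have := integral_comp_mul_left_Ioi' (fun t => Real.exp (-(1 * t ^ 2 / 2)) * (Real.sin (y / σ * t) / t)) 0 hσ
  rw [mul_zero] at this
  rw [← this, smul_eq_mul, ← integral_const_mul]
  congr 1; ext t
  have e : y / σ * (σ * t) = y * t := by field_simp
  rw [e, mul_pow, one_mul]
  field_simp

lemma pb_dirichlet_aux (n : ℕ) (t : ℝ) :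
    Real.sin ((n + 1 / 2) * t) = 2 * Real.sin (t / 2) * (1 / 2 + ∑ i ∈ Finset.range n, Real.cos ((i + 1) * t)) := by
  induction n with
  | zero =>
    have : ((0 : ℕ) + 1 / 2 : ℝ) * t = t / 2 := by push_cast; ring
    rw [this]; simp; ring
  | succ n ih =>
    rw [Finset.sum_range_succ]
    have h := Real.sin_sub_sin (((n + 1 : ℕ) + 1 / 2) * t) ((n + 1 / 2) * t)
    have e1 : ((((n + 1 : ℕ) : ℝ) + 1 / 2) * t - (n + 1 / 2) * t) / 2 = t / 2 := by push_cast; ring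
    have e2 : ((((n + 1 : ℕ) : ℝ) + 1 / 2) * t + (n + 1 / 2) * t) / 2 = (n + 1) * t := by push_cast; ring
    rw [e1, e2] at h
    linarith

lemma pb_sin_half_pos {t : ℝ} (h0 : 0 < t) (h1 : t ≤ Real.pi) : 0 < Real.sin (t / 2) :=
  Real.sin_pos_of_pos_of_lt_pi (by linarith) (by linarith [Real.pi_pos])

lemma pb_dirichlet (n : ℕ) :
    IntervalIntegrable (fun t => Real.sin ((n + 1 / 2) * t) / (2 * Real.sin (t / 2))) volume 0 Real.pi ∧
    ∫ t in (0:ℝ)..Real.pi, Real.sin ((n + 1 / 2) * t) / (2 * Real.sin (t / 2)) = Real.pi / 2 := by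
  have hc : Continuous (fun t : ℝ => 1 / 2 + ∑ i ∈ Finset.range n, Real.cos ((i + 1) * t)) := by fun_prop
  have he : ∀ t ∈ Set.uIoc (0:ℝ) Real.pi, 1 / 2 + ∑ i ∈ Finset.range n, Real.cos ((i + 1) * t) =
      Real.sin ((n + 1 / 2) * t) / (2 * Real.sin (t / 2)) := by
    intro t ht
    rw [Set.uIoc_of_le Real.pi_pos.le] at ht
    have := pb_sin_half_pos ht.1 ht.2
    rw [pb_dirichlet_aux, mul_div_cancel_left₀ _ (by positivity)]
  constructor
  · exact (hc.intervalIntegrable 0 Real.pi).congr he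
  · rw [← intervalIntegral.integral_congr_ae (Filter.Eventually.of_forall he)]
    rw [intervalIntegral.integral_add (by simp) (Continuous.intervalIntegrable (by fun_prop) _ _),
      intervalIntegral.integral_finsetSum (fun i _ => Continuous.intervalIntegrable (by fun_prop) _ _)]
    have : ∀ i ∈ Finset.range n, ∫ t in (0:ℝ)..Real.pi, Real.cos (((i:ℝ) + 1) * t) = 0 := by
      intro i _
      have hi : (i:ℝ) + 1 ≠ 0 := by positivity
      rw [intervalIntegral.integral_comp_mul_left (fun t => Real.cos t) hi, integral_cos]
      have := Real.sin_nat_mul_pi (i + 1)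
      push_cast at this
      simp [this]
    rw [Finset.sum_eq_zero this]
    simp; ring

lemma pb_dirichlet' (j k : ℕ) :
    IntervalIntegrable (fun t => Real.sin (((j:ℝ) - k + 1 / 2) * t) / (2 * Real.sin (t / 2))) volume 0 Real.pi ∧
    ∫ t in (0:ℝ)..Real.pi, Real.sin (((j:ℝ) - k + 1 / 2) * t) / (2 * Real.sin (t / 2)) =
      if k ≤ j then Real.pi / 2 else -(Real.pi / 2) := by
  split_ifs with h
  · obtain ⟨n, rfl⟩ := Nat.exists_eq_add_of_le h
    have := pb_dirichlet n
    have e : (((k + n : ℕ) : ℝ) - k + 1 / 2) = n + 1 / 2 := by push_cast; ring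
    rw [e]; exact this
  · obtain ⟨n, rfl⟩ := Nat.exists_eq_add_of_lt (not_le.mp h)
    have := pb_dirichlet n
    have e : ∀ t, Real.sin (((j:ℝ) - (j + n + 1 : ℕ) + 1 / 2) * t) / (2 * Real.sin (t / 2)) =
        - (Real.sin ((n + 1 / 2) * t) / (2 * Real.sin (t / 2))) := by
      intro t
      rw [← neg_div, ← Real.sin_neg]; congr 2; push_cast; ring
    simp_rw [e]
    refine ⟨this.1.neg, ?_⟩
    rw [intervalIntegral.integral_neg, this.2]

/-- `f` is the (real) generating polynomial of `μ`. -/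
def PbGen (μ : PMF ℕ) (f : Polynomial ℝ) : Prop :=
  (∀ j, 0 ≤ f.coeff j) ∧ ∀ j, μ j = ENNReal.ofReal (f.coeff j)

lemma PbGen.bind {μ ν : PMF ℕ} {f g : Polynomial ℝ} (hf : PbGen μ f) (hg : PbGen ν g) :
    PbGen (μ.bind fun s => ν.map fun x => s + x) (f * g) := by
  constructor
  · intro j
    rw [Polynomial.coeff_mul]
    exact Finset.sum_nonneg fun x _ => mul_nonneg (hf.1 _) (hg.1 _)
  · intro j
    rw [PMF.bind_apply, Polynomial.coeff_mul,
      Finset.Nat.sum_antidiagonal_eq_sum_range_succ (fun a b => f.coeff a * g.coeff b) j,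
      ENNReal.ofReal_sum_of_nonneg (fun x _ => mul_nonneg (hf.1 _) (hg.1 _))]
    have hm : ∀ s, (ν.map fun x => s + x) j = if s ≤ j then ν (j - s) else 0 := by
      intro s
      rw [PMF.map_apply]
      split_ifs with h
      · rw [tsum_eq_single (j - s)]
        · rw [if_pos (by omega)]
        · intro b hb
          rw [if_neg (by omega)]
      · rw [ENNReal.tsum_eq_zero]
        intro b
        rw [if_neg (by omega)]
    rw [tsum_eq_sum (s := Finset.range j.succ)]
    · apply Finset.sum_congr rfl
      intro s hs
      rw [hm, if_pos (by simpa [Nat.lt_succ_iff] using hs), hf.2, hg.2, ENNReal.ofReal_mul (hf.1 _)]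
    · intro s hs
      rw [hm, if_neg (by simpa [Nat.lt_succ_iff] using hs), mul_zero]

lemma PbGen.bern {p : ℝ} (hp0 : 0 ≤ p) (hp1 : p ≤ 1) :
    PbGen (bernNat (ENNReal.ofReal p) (ENNReal.ofReal_le_one.mpr hp1))
      (Polynomial.C (1 - p) + Polynomial.C p * Polynomial.X) := by
  have hc : ∀ j, (Polynomial.C (1 - p) + Polynomial.C p * Polynomial.X : Polynomial ℝ).coeff j =
      if j = 0 then 1 - p else if j = 1 then p else 0 := by
    intro j
    rw [Polynomial.coeff_add, Polynomial.coeff_C, Polynomial.coeff_C_mul, Polynomial.coeff_X]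
    rcases j with _ | _ | j <;> simp
  constructor
  · intro j; rw [hc]; split_ifs <;> linarith
  · intro j
    rw [hc, bernNat, PMF.map_apply, tsum_fintype, Fintype.sum_bool]
    simp only [PMF.ofFintype_apply, cond_true, cond_false, if_true, Bool.false_eq_true, if_false]
    rcases j with _ | _ | j
    · simp [ENNReal.ofReal_sub _ hp0]
    · simp
    · simp

lemma PbGen.iid {μ : PMF ℕ} {f : Polynomial ℝ} (hf : PbGen μ f) (n : ℕ) : PbGen (iidSum μ n) (f ^ n) := by
  induction n with
  | zero =>
    rw [pow_zero, iidSum]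
    constructor
    · intro j; rw [Polynomial.coeff_one]; split_ifs <;> norm_num
    · intro j; rw [Polynomial.coeff_one, PMF.pure_apply]; split_ifs <;> simp
  | succ n ih => rw [pow_succ, iidSum]; exact ih.bind hf

lemma PbGen.tail {μ : PMF ℕ} {f : Polynomial ℝ} (hf : PbGen μ f) (τ : ℝ) :
    (μ.toMeasure {n : ℕ | τ ≤ (n:ℝ)}).toReal =
      ∑ j ∈ Finset.range (f.natDegree + 1), if ⌈τ⌉₊ ≤ j then f.coeff j else 0 := by
  rw [PMF.toMeasure_apply_eq_tsum, tsum_eq_sum (s := Finset.range (f.natDegree + 1))]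
  · have : ∀ j ∈ Finset.range (f.natDegree + 1), ({n : ℕ | τ ≤ (n:ℝ)}.indicator μ j) =
        ENNReal.ofReal (if ⌈τ⌉₊ ≤ j then f.coeff j else 0) := by
      intro j _
      by_cases h : τ ≤ (j:ℝ)
      · rw [Set.indicator_of_mem (show j ∈ {n : ℕ | τ ≤ (n:ℝ)} from h), if_pos (Nat.ceil_le.mpr h), hf.2]
      · rw [Set.indicator_of_notMem (show j ∉ {n : ℕ | τ ≤ (n:ℝ)} from h), if_neg (fun h' => h (Nat.ceil_le.mp h'))]
        simp
    have nn : ∀ j, 0 ≤ (if ⌈τ⌉₊ ≤ j then f.coeff j else 0) := by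
      intro j; split_ifs
      · exact hf.1 j
      · exact le_rfl
    rw [Finset.sum_congr rfl this, ← ENNReal.ofReal_sum_of_nonneg (fun j _ => nn j),
      ENNReal.toReal_ofReal (Finset.sum_nonneg fun j _ => nn j)]
  · intro j hj
    have : f.coeff j = 0 := Polynomial.coeff_eq_zero_of_natDegree_lt (by simpa using hj)
    rw [Set.indicator_apply, hf.2, this]; simp

lemma pb_tail_fourier {p q : ℝ} (hp0 : 0 ≤ p) (hp1 : p ≤ 1) (hq0 : 0 ≤ q) (hq1 : q ≤ 1) (m l : ℕ)
    (τ y : ℝ) (hy : y = m * p + l * q - ⌈τ⌉₊ + 1 / 2) :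
    IntervalIntegrable (fun t : ℝ => (pbChar p t ^ m * pbChar q t ^ l * Complex.exp (Complex.I * (y * t : ℝ))).im
      / (2 * Real.sin (t / 2))) volume 0 Real.pi ∧
    ((poissonBinomial (ENNReal.ofReal p) (ENNReal.ofReal q)
          (ENNReal.ofReal_le_one.mpr hp1) (ENNReal.ofReal_le_one.mpr hq1) m l).toMeasure
        {n : ℕ | τ ≤ (n : ℝ)}).toReal = 1 / 2 + (1 / Real.pi) *
      ∫ t in (0:ℝ)..Real.pi, (pbChar p t ^ m * pbChar q t ^ l * Complex.exp (Complex.I * (y * t : ℝ))).im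
      / (2 * Real.sin (t / 2)) := by
  set f : Polynomial ℝ := (Polynomial.C (1 - p) + Polynomial.C p * Polynomial.X) ^ m *
    (Polynomial.C (1 - q) + Polynomial.C q * Polynomial.X) ^ l with hf
  have hgen : PbGen (poissonBinomial (ENNReal.ofReal p) (ENNReal.ofReal q)
          (ENNReal.ofReal_le_one.mpr hp1) (ENNReal.ofReal_le_one.mpr hq1) m l) f :=
    ((PbGen.bern hp0 hp1).iid m).bind ((PbGen.bern hq0 hq1).iid l)
  rw [hgen.tail τ]
  set k := ⌈τ⌉₊
  have hsum : ∑ j ∈ Finset.range (f.natDegree + 1), f.coeff j = 1 := by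
    have h := Polynomial.eval_eq_sum_range (p := f) 1
    simp only [one_pow, mul_one] at h
    rw [← h, hf]; simp
  have hG : ∀ t : ℝ, (pbChar p t ^ m * pbChar q t ^ l * Complex.exp (Complex.I * (y * t : ℝ))).im
      / (2 * Real.sin (t / 2)) = ∑ j ∈ Finset.range (f.natDegree + 1),
        f.coeff j * (Real.sin (((j:ℝ) - k + 1 / 2) * t) / (2 * Real.sin (t / 2))) := by
    intro t
    have h1 := Polynomial.aeval_eq_sum_range (p := f) (Complex.exp (Complex.I * t))
    have h2 : Polynomial.aeval (Complex.exp (Complex.I * t)) f =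
      (1 - p + p * Complex.exp (Complex.I * t)) ^ m * (1 - q + q * Complex.exp (Complex.I * t)) ^ l := by
      rw [hf]; simp
    have h3 : pbChar p t ^ m * pbChar q t ^ l * Complex.exp (Complex.I * (y * t : ℝ)) =
       Polynomial.aeval (Complex.exp (Complex.I * t)) f * Complex.exp (Complex.I * ((-k + 1 / 2) * t : ℝ)) := by
      have h4 : Complex.exp (Complex.I * ((-k + 1 / 2) * t : ℝ)) = Complex.exp (-(Complex.I * (p * t : ℝ))) ^ m *
          Complex.exp (-(Complex.I * (q * t : ℝ))) ^ l * Complex.exp (Complex.I * (y * t : ℝ)) := by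
        rw [← Complex.exp_nat_mul, ← Complex.exp_nat_mul, ← Complex.exp_add, ← Complex.exp_add, hy]
        congr 1; push_cast; ring
      rw [h2, h4, pbChar, pbChar, mul_pow, mul_pow]; ring
    rw [h3, h1, Finset.sum_mul, Complex.im_sum, Finset.sum_div]
    apply Finset.sum_congr rfl
    intro j _
    rw [← mul_div_assoc]
    congr 1
    have h5 : f.coeff j • Complex.exp (Complex.I * t) ^ j * Complex.exp (Complex.I * ((-k + 1 / 2) * t : ℝ)) =
       (f.coeff j : ℂ) * Complex.exp (((((j:ℝ) - k + 1 / 2) * t : ℝ) : ℂ) * Complex.I) := by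
      rw [Complex.real_smul, mul_assoc, ← Complex.exp_nat_mul, ← Complex.exp_add]
      congr 2; push_cast; ring
    rw [h5, Complex.im_ofReal_mul, Complex.exp_ofReal_mul_I_im]
  simp_rw [hG]
  constructor
  · have := IntervalIntegrable.sum (μ := volume) (a := 0) (b := Real.pi) (Finset.range (f.natDegree + 1)) (f := fun j t =>
        f.coeff j * (Real.sin (((j:ℝ) - k + 1 / 2) * t) / (2 * Real.sin (t / 2))))
        (fun j _ => (pb_dirichlet' j k).1.const_mul _)
    convert! this using 1
    ext t; simp
  · rw [intervalIntegral.integral_finsetSum (fun j _ => (pb_dirichlet' j k).1.const_mul _)]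
    simp_rw [intervalIntegral.integral_const_mul, (pb_dirichlet' _ k).2]
    rw [show (1/2 : ℝ) = (1/2) * ∑ j ∈ Finset.range (f.natDegree + 1), f.coeff j by rw [hsum, mul_one],
      Finset.mul_sum, Finset.mul_sum, ← Finset.sum_add_distrib]
    apply Finset.sum_congr rfl
    intro j _
    have := Real.pi_pos
    split_ifs
    · field_simp; ring
    · field_simp; ring

lemma pb_mom1 {s : ℝ} (hs : 0 < s) : IntegrableOn (fun t : ℝ => t * Real.exp (-(s * t ^ 2 / 2))) (Set.Ioi 0) ∧
    ∫ t in Set.Ioi (0:ℝ), t * Real.exp (-(s * t ^ 2 / 2)) = 1 / s := by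
  have h1 := integrableOn_rpow_mul_exp_neg_mul_sq (b := s / 2) (by linarith) (s := 1) (by norm_num)
  have h2 := integral_rpow_mul_exp_neg_mul_rpow (p := 2) (q := 1) (b := s / 2) (by norm_num) (by norm_num) (by linarith)
  have e : ∀ t : ℝ, t * Real.exp (-(s * t ^ 2 / 2)) = t ^ (1:ℝ) * Real.exp (-(s / 2) * t ^ 2) := by
    intro t; rw [Real.rpow_one]; congr 2; ring
  simp_rw [e]
  refine ⟨h1, ?_⟩
  norm_num at h2 ⊢
  rw [h2, Real.rpow_neg_one]; field_simp

lemma pb_mom2 {σ : ℝ} (hσ : 0 < σ) :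
    IntegrableOn (fun t : ℝ => t ^ 2 * Real.exp (-(25 / 72 * σ ^ 2 * t ^ 2))) (Set.Ioi 0) ∧
    ∫ t in Set.Ioi (0:ℝ), t ^ 2 * Real.exp (-(25 / 72 * σ ^ 2 * t ^ 2)) ≤ 2.17 / σ ^ 3 := by
  have hb : 0 < 25 / 72 * σ ^ 2 := by positivity
  have h1 := integrableOn_rpow_mul_exp_neg_mul_sq hb (s := 2) (by norm_num)
  have h2 := integral_rpow_mul_exp_neg_mul_rpow (p := 2) (q := 2) (by norm_num) (by norm_num) hb
  have e : ∀ t : ℝ, t ^ 2 * Real.exp (-(25 / 72 * σ ^ 2 * t ^ 2)) = t ^ (2:ℝ) * Real.exp (-(25 / 72 * σ ^ 2) * t ^ 2) := by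
    intro t; rw [Real.rpow_two]; congr 2; ring
  simp_rw [e]
  refine ⟨h1, ?_⟩
  simp_rw [Real.rpow_two] at h2 ⊢
  rw [h2]
  have hG : Real.Gamma ((2 + 1) / 2) = Real.sqrt Real.pi / 2 := by
    rw [show ((2:ℝ) + 1) / 2 = 1 / 2 + 1 by norm_num, Real.Gamma_add_one (by norm_num), Real.Gamma_one_half_eq]; ring
  rw [hG]
  set c : ℝ := 25 / 72 * σ ^ 2 with hc
  have hpow : c ^ (-(2 + 1 : ℝ) / 2) = 1 / (c * Real.sqrt c) := by
    rw [show (-(2 + 1 : ℝ) / 2) = -(1 + 1 / 2) by norm_num, Real.rpow_neg hb.le, Real.rpow_add hb, Real.rpow_one,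
      ← Real.sqrt_eq_rpow, one_div]
  rw [hpow]
  have hs1 : 0.589 * σ ≤ Real.sqrt c := by
    apply Real.le_sqrt_of_sq_le
    rw [hc]; nlinarith [sq_nonneg σ]
  have hs2 : Real.sqrt Real.pi ≤ 1.773 := by
    rw [Real.sqrt_le_iff]; constructor
    · norm_num
    · have := Real.pi_lt_d4; norm_num at this ⊢; linarith
  have hs3 : c * (0.589 * σ) ≤ c * Real.sqrt c := by gcongr
  have hs4 : 0 < c * (0.589 * σ) := by positivity
  calc 1 / (c * Real.sqrt c) * (1 / 2) * (Real.sqrt Real.pi / 2) ≤ 1 / (c * (0.589 * σ)) * (1 / 2) * (1.773 / 2) := by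
        gcongr
    _ ≤ 2.17 / σ ^ 3 := by
        rw [hc, div_mul_div_comm, div_mul_div_comm, div_le_div_iff₀ (by positivity) (by positivity)]
        have : 0 < σ ^ 3 := by positivity
        nlinarith

lemma pb_sin_lower {t : ℝ} (h0 : 0 < t) (h2 : t ≤ 2) : t / 2 * (1 - t ^ 2 / 24) ≤ Real.sin (t / 2) ∧
    5 / 12 * t ≤ Real.sin (t / 2) := by
  have h := Real.sin_ge_sub_cube (x := t / 2) (by linarith)
  constructor
  · refine le_trans (le_of_eq ?_) h; ring
  · refine le_trans ?_ h
    have : t ^ 2 ≤ 4 := by nlinarith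
    nlinarith

lemma pb_sin_lower' {t : ℝ} (h2 : 2 ≤ t) (hpi : t ≤ Real.pi) : 5 / 6 ≤ Real.sin (t / 2) := by
  have h := Real.sin_ge_sub_cube (x := 1) (by norm_num)
  have h3 : Real.sin 1 ≤ Real.sin (t / 2) :=
    Real.sin_le_sin_of_le_of_le_pi_div_two (by linarith [Real.pi_gt_three]) (by linarith) (by linarith)
  norm_num at h
  linarith

lemma pb_exp_half : Real.exp (1 / 2) ≤ 1.65 := by
  have h : Real.exp (1 / 2) ^ 2 = Real.exp 1 := by rw [← Real.exp_nat_mul]; norm_num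
  have h1 := Real.exp_one_lt_d9
  have h2 := Real.exp_pos (1/2)
  nlinarith

set_option maxHeartbeats 4000000 in
lemma pb_core {p q : ℝ} (hp0 : 0 ≤ p) (hp1 : p ≤ 1) (hq0 : 0 ≤ q) (hq1 : q ≤ 1) (m l : ℕ)
    {σ : ℝ} (hσ : 0.7915 ≤ σ) (hs : σ ^ 2 = m * (p * (1 - p)) + l * (q * (1 - q))) (y : ℝ)
    (hint : IntervalIntegrable (fun t : ℝ => (pbChar p t ^ m * pbChar q t ^ l * Complex.exp (Complex.I * (y * t : ℝ))).im
      / (2 * Real.sin (t / 2))) volume 0 Real.pi) :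
    |(∫ t in (0:ℝ)..Real.pi, (pbChar p t ^ m * pbChar q t ^ l * Complex.exp (Complex.I * (y * t : ℝ))).im
      / (2 * Real.sin (t / 2))) -
      ∫ t in Set.Ioi (0:ℝ), Real.exp (-(σ ^ 2 * t ^ 2 / 2)) * (Real.sin (y * t) / t)| ≤ 1.6 / σ := by
  set φ : ℝ → ℂ := fun t => pbChar p t ^ m * pbChar q t ^ l with hφ
  set G : ℝ → ℝ := fun t => (φ t * Complex.exp (Complex.I * (y * t : ℝ))).im / (2 * Real.sin (t / 2)) with hG
  set N : ℝ → ℝ := fun t => Real.exp (-(σ ^ 2 * t ^ 2 / 2)) * (Real.sin (y * t) / t) with hN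
  change IntervalIntegrable G volume 0 Real.pi at hint
  change |(∫ t in (0:ℝ)..Real.pi, G t) - ∫ t in Set.Ioi (0:ℝ), N t| ≤ _
  have hσ0 : 0 < σ := by linarith
  have hs0 : 0 < σ ^ 2 := by positivity
  have hpi := Real.pi_gt_three
  have hpi4 := Real.pi_lt_d4
  have hNint : Integrable N := pb_sinc_int hs0 y
  have hb : ∀ t, _ := fun t => pb_char_bound (t := t) hp0 hp1 hq0 hq1 m l hs
  have hexp1 : ∀ x : ℝ, ‖Complex.exp (Complex.I * (x : ℝ))‖ = 1 := Complex.norm_exp_I_mul_ofReal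
  -- splitting
  have i02 : IntervalIntegrable G volume 0 2 := hint.mono_set (by
    rw [Set.uIcc_of_le (by norm_num), Set.uIcc_of_le (by linarith)]
    exact Set.Icc_subset_Icc_right (by linarith))
  have i2p : IntervalIntegrable G volume 2 Real.pi := hint.mono_set (by
    rw [Set.uIcc_of_le (by linarith), Set.uIcc_of_le (by linarith)]
    exact Set.Icc_subset_Icc_left (by linarith))
  have n02 : IntervalIntegrable N volume 0 2 := hNint.intervalIntegrable
  have s1 := intervalIntegral.integral_add_adjacent_intervals i02 i2p
  have s2 := intervalIntegral.integral_interval_add_Ioi (a := 0) (b := 2) (f := N) (μ := volume)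
    hNint.integrableOn hNint.integrableOn
  have s3 := intervalIntegral.integral_sub i02 n02
  have M1 := pb_mom1 hs0
  have M2 := pb_mom2 hσ0
  -- first piece
  have I1 : |∫ t in (0:ℝ)..2, (G t - N t)| ≤
      Real.exp (1 / 2) * σ ^ 2 / 5 * (2.17 / σ ^ 3) + 1 / 20 * (1 / σ ^ 2) := by
    set h : ℝ → ℝ := fun t => Real.exp (1 / 2) * σ ^ 2 / 5 * (t ^ 2 * Real.exp (-(25 / 72 * σ ^ 2 * t ^ 2)))
      + 1 / 20 * (t * Real.exp (-(σ ^ 2 * t ^ 2 / 2))) with hh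
    have hhint : IntegrableOn h (Set.Ioi 0) := (M2.1.const_mul _).add (M1.1.const_mul _)
    have hpt : ∀ t ∈ Set.Ioc (0:ℝ) 2, ‖G t - N t‖ ≤ h t := by
      intro t ht
      obtain ⟨l1, l2⟩ := pb_sin_lower ht.1 ht.2
      have t0 := ht.1
      have hS : 0 < Real.sin (t / 2) := by linarith
      have e1 : G t - N t = ((φ t - (Real.exp (-(σ ^ 2 * t ^ 2 / 2)) : ℝ)) * Complex.exp (Complex.I * (y * t : ℝ))).im
          / (2 * Real.sin (t / 2)) + Real.exp (-(σ ^ 2 * t ^ 2 / 2)) * Real.sin (y * t) * (1 / (2 * Real.sin (t / 2)) - 1 / t) := by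
        rw [hG, hN]
        simp only
        rw [sub_mul, Complex.sub_im, Complex.im_ofReal_mul, mul_comm Complex.I ((y * t : ℝ) : ℂ), Complex.exp_ofReal_mul_I_im]
        ring
      rw [e1]
      refine (norm_add_le _ _).trans ?_
      rw [hh]
      simp only
      apply add_le_add
      · rw [norm_div, Real.norm_of_nonneg (show 0 ≤ 2 * Real.sin (t / 2) by linarith), Real.norm_eq_abs]
        have b1 := Complex.abs_im_le_norm ((φ t - (Real.exp (-(σ ^ 2 * t ^ 2 / 2)) : ℝ)) * Complex.exp (Complex.I * (y * t : ℝ)))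
        rw [norm_mul, hexp1, mul_one] at b1
        have b2 := b1.trans ((hb t).2 ht.1.le ht.2)
        have b3 : Real.exp (-(2 * σ ^ 2 * Real.sin (t / 2) ^ 2)) ≤ Real.exp (-(25 / 72 * σ ^ 2 * t ^ 2)) := by
          apply Real.exp_le_exp.mpr
          have : (5 / 12 * t) ^ 2 ≤ Real.sin (t / 2) ^ 2 := by gcongr
          nlinarith
        rw [div_le_iff₀ (by linarith)]
        refine b2.trans ?_
        calc Real.exp (1 / 2) * (σ ^ 2 * (t ^ 3 / 6)) * Real.exp (-(2 * σ ^ 2 * Real.sin (t / 2) ^ 2))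
            ≤ Real.exp (1 / 2) * (σ ^ 2 * (t ^ 3 / 6)) * Real.exp (-(25 / 72 * σ ^ 2 * t ^ 2)) := by gcongr
          _ = Real.exp (1 / 2) * σ ^ 2 / 5 * (t ^ 2 * Real.exp (-(25 / 72 * σ ^ 2 * t ^ 2))) * (2 * (5 / 12 * t)) := by ring
          _ ≤ _ := by gcongr
      · have c1 : 1 / t ≤ 1 / (2 * Real.sin (t / 2)) := by
          apply one_div_le_one_div_of_le (by linarith)
          have := Real.sin_le (x := t / 2) (by linarith)
          linarith
        have c2 : 1 / (2 * Real.sin (t / 2)) - 1 / t ≤ t / 20 := by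
          rw [div_sub_div _ _ (by positivity) (by positivity), div_le_div_iff₀ (by positivity) (by norm_num)]
          have l3 := mul_le_mul_of_nonneg_left l2 (sq_nonneg t)
          ring_nf at l1 l3 ⊢
          linarith
        rw [norm_mul, norm_mul, Real.norm_of_nonneg (Real.exp_pos _).le, Real.norm_of_nonneg (sub_nonneg.mpr c1)]
        calc _ ≤ Real.exp (-(σ ^ 2 * t ^ 2 / 2)) * 1 * (t / 20) := by
              gcongr
              exact Real.abs_sin_le_one _
          _ = _ := by ring
    rw [intervalIntegral.integral_of_le (by norm_num), ← Real.norm_eq_abs]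
    calc _ ≤ ∫ t in Set.Ioc (0:ℝ) 2, h t := by
          apply norm_integral_le_of_norm_le (hhint.mono_set Set.Ioc_subset_Ioi_self)
          exact (ae_restrict_iff' measurableSet_Ioc).mpr (Filter.Eventually.of_forall hpt)
      _ ≤ ∫ t in Set.Ioi (0:ℝ), h t := by
          apply setIntegral_mono_set hhint
          · refine (ae_restrict_iff' measurableSet_Ioi).mpr (Filter.Eventually.of_forall fun t (ht : 0 < t) => ?_)
            simp only [Pi.zero_apply, hh]; positivity
          · exact Filter.Eventually.of_forall Set.Ioc_subset_Ioi_self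
      _ = Real.exp (1 / 2) * σ ^ 2 / 5 * (∫ t in Set.Ioi (0:ℝ), t ^ 2 * Real.exp (-(25 / 72 * σ ^ 2 * t ^ 2)))
           + 1 / 20 * (1 / σ ^ 2) := by
          rw [hh, integral_add (M2.1.const_mul _) (M1.1.const_mul _), integral_const_mul, integral_const_mul, M1.2]
      _ ≤ _ := by gcongr; exact M2.2
  -- second piece
  have I2 : |∫ t in (2:ℝ)..Real.pi, G t| ≤ 0.6 * Real.exp (-(25 / 18 * σ ^ 2)) * (Real.pi - 2) := by
    have := intervalIntegral.norm_integral_le_of_norm_le_const (a := 2) (b := Real.pi) (f := G)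
      (C := 0.6 * Real.exp (-(25 / 18 * σ ^ 2))) (by
        intro t ht
        rw [Set.uIoc_of_le (by linarith)] at ht
        have l1 := pb_sin_lower' ht.1.le ht.2
        rw [hG]; simp only
        rw [norm_div, Real.norm_of_nonneg (show 0 ≤ 2 * Real.sin (t / 2) by linarith), Real.norm_eq_abs, div_le_iff₀ (by linarith)]
        have b1 := Complex.abs_im_le_norm (φ t * Complex.exp (Complex.I * (y * t : ℝ)))
        rw [norm_mul, hexp1, mul_one] at b1
        have b2 := b1.trans (hb t).1
        have b3 : Real.exp (-(2 * σ ^ 2 * Real.sin (t / 2) ^ 2)) ≤ Real.exp (-(25 / 18 * σ ^ 2)) := by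
          apply Real.exp_le_exp.mpr
          have : (5 / 6 : ℝ) ^ 2 ≤ Real.sin (t / 2) ^ 2 := by gcongr
          nlinarith
        refine (b2.trans b3).trans ?_
        nlinarith [Real.exp_pos (-(25 / 18 * σ ^ 2))])
    rwa [Real.norm_eq_abs, abs_of_nonneg (show 0 ≤ Real.pi - 2 by linarith)] at this
  -- third piece
  have I3 : |∫ t in Set.Ioi (2:ℝ), N t| ≤ 1 / 4 * (1 / σ ^ 2) := by
    have hi : IntegrableOn (fun t : ℝ => 1 / 4 * (t * Real.exp (-(σ ^ 2 * t ^ 2 / 2)))) (Set.Ioi 0) := M1.1.const_mul _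
    have hsub : Set.Ioi (2:ℝ) ⊆ Set.Ioi 0 := Set.Ioi_subset_Ioi (by norm_num)
    rw [← Real.norm_eq_abs]
    calc _ ≤ ∫ t in Set.Ioi (2:ℝ), 1 / 4 * (t * Real.exp (-(σ ^ 2 * t ^ 2 / 2))) := by
          apply norm_integral_le_of_norm_le (hi.mono_set hsub)
          refine (ae_restrict_iff' measurableSet_Ioi).mpr (Filter.Eventually.of_forall fun t (ht : 2 < t) => ?_)
          rw [hN]; simp only
          rw [norm_mul, norm_div, Real.norm_of_nonneg (Real.exp_pos _).le, Real.norm_of_nonneg (show 0 ≤ t by linarith)]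
          have : ‖Real.sin (y * t)‖ / t ≤ t / 4 := by
            rw [div_le_iff₀ (by linarith)]
            have := Real.abs_sin_le_one (y * t)
            rw [Real.norm_eq_abs]; nlinarith
          calc _ ≤ Real.exp (-(σ ^ 2 * t ^ 2 / 2)) * (t / 4) := by gcongr
            _ = _ := by ring
      _ ≤ ∫ t in Set.Ioi (0:ℝ), 1 / 4 * (t * Real.exp (-(σ ^ 2 * t ^ 2 / 2))) := by
          apply setIntegral_mono_set hi
          · refine (ae_restrict_iff' measurableSet_Ioi).mpr (Filter.Eventually.of_forall fun t (ht : 0 < t) => ?_)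
            simp only [Pi.zero_apply]; positivity
          · exact Filter.Eventually.of_forall hsub
      _ = _ := by rw [integral_const_mul, M1.2]
  -- numerics
  have J0 : 1 / σ ^ 2 ≤ 1.2635 / σ := by
    rw [div_le_div_iff₀ (by positivity) hσ0]; nlinarith
  have J1 : Real.exp (1 / 2) * σ ^ 2 / 5 * (2.17 / σ ^ 3) ≤ 0.7162 / σ := by
    have : Real.exp (1 / 2) * σ ^ 2 / 5 * (2.17 / σ ^ 3) = Real.exp (1 / 2) * 0.434 / σ := by field_simp; norm_num
    rw [this]; gcongr; linarith [pb_exp_half]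
  have J2 : 0.6 * Real.exp (-(25 / 18 * σ ^ 2)) * (Real.pi - 2) ≤ 0.31 / σ := by
    have k1 : Real.exp (-(25 / 18 * σ ^ 2)) ≤ 0.43 / σ := by
      rw [Real.exp_neg, inv_eq_one_div, div_le_div_iff₀ (Real.exp_pos _) hσ0]
      have := Real.add_one_le_exp (25 / 18 * σ ^ 2)
      nlinarith [sq_nonneg (σ - 0.85)]
    calc _ ≤ 0.6 * (0.43 / σ) * (3.1416 - 2) := by gcongr; linarith
      _ = (0.6 * 0.43 * (3.1416 - 2)) / σ * 1 := by ring
      _ ≤ _ := by rw [mul_one]; gcongr; norm_num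
  have key : (∫ t in (0:ℝ)..Real.pi, G t) - ∫ t in Set.Ioi (0:ℝ), N t =
      (∫ t in (0:ℝ)..2, (G t - N t)) + (∫ t in (2:ℝ)..Real.pi, G t) - ∫ t in Set.Ioi (2:ℝ), N t := by
    linarith
  rw [key]
  have A1 := abs_sub ((∫ t in (0:ℝ)..2, (G t - N t)) + (∫ t in (2:ℝ)..Real.pi, G t)) (∫ t in Set.Ioi (2:ℝ), N t)
  have A2 := abs_add_le (∫ t in (0:ℝ)..2, (G t - N t)) (∫ t in (2:ℝ)..Real.pi, G t)
  have A3 : 0.7162 / σ + 0.31 / σ + 0.3 * (1.2635 / σ) ≤ 1.6 / σ := by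
    rw [← mul_div_assoc, ← add_div, ← add_div]; gcongr; norm_num
  linarith

/-- Normal approximation (with Berry–Esseen constant `0.7915`) of the tail
probability `U = P(X ≥ r²(γp + (1−γ)q))` of the Poisson binomial variable `X` with `a·a'`
Bernoulli(`p`) and `r² − a·a'` Bernoulli(`q`) summands, written in terms of
`θ = a·a'/r²`. -/
theorem poissonBinomial_tail_normal_approx
    (r : ℕ) (hr : 0 < r)
    (p q : ℝ) (hp0 : 0 < p) (hp1 : p < 1) (hq0 : 0 < q) (hq1 : q < 1)
    (K : ℕ) (a a' : Fin K → ℕ)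
    (hm : ∑ k, a k * a' k ≤ r ^ 2)
    (γ : ℝ) (hγ0 : 0 ≤ γ) (hγ1 : γ ≤ 1) :
    |((poissonBinomial (ENNReal.ofReal p) (ENNReal.ofReal q)
          (ENNReal.ofReal_le_one.mpr hp1.le) (ENNReal.ofReal_le_one.mpr hq1.le)
          (∑ k, a k * a' k) (r ^ 2 - ∑ k, a k * a' k)).toMeasure
        {n : ℕ | (r : ℝ) ^ 2 * (γ * p + (1 - γ) * q) ≤ (n : ℝ)}).toReal -
      stdNormalCDF ((r : ℝ) * (p - q) * (((∑ k, a k * a' k : ℕ) : ℝ) / (r : ℝ) ^ 2 - γ) /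
        Real.sqrt (p * (1 - p) * (((∑ k, a k * a' k : ℕ) : ℝ) / (r : ℝ) ^ 2) +
          q * (1 - q) * (1 - ((∑ k, a k * a' k : ℕ) : ℝ) / (r : ℝ) ^ 2)))| ≤
      0.7915 / ((r : ℝ) *
        Real.sqrt (p * (1 - p) * (((∑ k, a k * a' k : ℕ) : ℝ) / (r : ℝ) ^ 2) +
          q * (1 - q) * (1 - ((∑ k, a k * a' k : ℕ) : ℝ) / (r : ℝ) ^ 2))) := by
  have hM := hm
  revert hM
  generalize (∑ k, a k * a' k) = M
  intro hM
  have hr0 : (0:ℝ) < r := by exact_mod_cast hr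
  have hl : ((r ^ 2 - M : ℕ) : ℝ) = (r:ℝ) ^ 2 - M := by rw [Nat.cast_sub hM]; push_cast; ring
  have hMr : (M:ℝ) ≤ (r:ℝ) ^ 2 := by exact_mod_cast hM
  have hM0 : (0:ℝ) ≤ M := Nat.cast_nonneg M
  set θ : ℝ := (M:ℝ) / (r:ℝ) ^ 2 with hθ
  have hMθ : (M:ℝ) = (r:ℝ) ^ 2 * θ := by rw [hθ]; field_simp
  have hθ0 : 0 ≤ θ := by positivity
  have hθ1 : θ ≤ 1 := by rw [hθ, div_le_one (by positivity)]; exact hMr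
  have hpp : 0 < p * (1 - p) := mul_pos hp0 (by linarith)
  have hqq : 0 < q * (1 - q) := mul_pos hq0 (by linarith)
  set w : ℝ := p * (1 - p) * θ + q * (1 - q) * (1 - θ) with hw
  have hw0 : 0 < w := by
    rcases hθ0.eq_or_lt with h | h
    · rw [hw, ← h]; linarith
    · have h1 := mul_pos hpp h
      have h2 : 0 ≤ q * (1 - q) * (1 - θ) := mul_nonneg hqq.le (by linarith)
      rw [hw]; linarith
  have hsw : 0 < Real.sqrt w := Real.sqrt_pos.mpr hw0
  set σ : ℝ := (r:ℝ) * Real.sqrt w with hσd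
  have hσ0 : 0 < σ := mul_pos hr0 hsw
  have hs : σ ^ 2 = M * (p * (1 - p)) + ((r ^ 2 - M : ℕ) : ℝ) * (q * (1 - q)) := by
    rw [hσd, mul_pow, Real.sq_sqrt hw0.le, hl, hMθ, hw]; ring
  set τ : ℝ := (r:ℝ) ^ 2 * (γ * p + (1 - γ) * q) with hτ
  have hτ0 : 0 ≤ τ := by
    have h1 : 0 ≤ γ * p := mul_nonneg hγ0 hp0.le
    have h2 : 0 ≤ (1 - γ) * q := mul_nonneg (by linarith) hq0.le
    rw [hτ]; exact mul_nonneg (by positivity) (by linarith)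
  have harg : (r:ℝ) * (p - q) * (θ - γ) / Real.sqrt w =
      (M * p + ((r ^ 2 - M : ℕ) : ℝ) * q - τ) / σ := by
    rw [hl, hMθ, hτ, hσd]
    field_simp
    ring
  rw [harg]
  rcases le_total σ 0.7915 with hc | hc
  · have h1 : 1 ≤ 0.7915 / σ := by rw [le_div_iff₀ hσ0]; linarith
    refine le_trans ?_ h1
    have u0 := pb_cdf_nonneg ((M * p + ((r ^ 2 - M : ℕ) : ℝ) * q - τ) / σ)
    have u1 := pb_cdf_le_one ((M * p + ((r ^ 2 - M : ℕ) : ℝ) * q - τ) / σ)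
    have v1 : ((poissonBinomial (ENNReal.ofReal p) (ENNReal.ofReal q)
          (ENNReal.ofReal_le_one.mpr hp1.le) (ENNReal.ofReal_le_one.mpr hq1.le)
          M (r ^ 2 - M)).toMeasure {n : ℕ | τ ≤ (n : ℝ)}).toReal ≤ 1 := by
      apply ENNReal.toReal_le_of_le_ofReal zero_le_one
      rw [ENNReal.ofReal_one]
      exact prob_le_one
    have v0 : 0 ≤ ((poissonBinomial (ENNReal.ofReal p) (ENNReal.ofReal q)
          (ENNReal.ofReal_le_one.mpr hp1.le) (ENNReal.ofReal_le_one.mpr hq1.le)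
          M (r ^ 2 - M)).toMeasure {n : ℕ | τ ≤ (n : ℝ)}).toReal := ENNReal.toReal_nonneg
    rw [abs_le]; constructor <;> linarith
  · obtain ⟨hint, htail⟩ := pb_tail_fourier hp0.le hp1.le hq0.le hq1.le M (r ^ 2 - M) τ _ rfl
    set y : ℝ := M * p + ((r ^ 2 - M : ℕ) : ℝ) * q - ⌈τ⌉₊ + 1 / 2 with hy
    have hcore := pb_core hp0.le hp1.le hq0.le hq1.le M (r ^ 2 - M) hc hs y hint
    have hinv := pb_cdf_inv' hσ0 y
    have hlip := pb_cdf_lip (y / σ) ((M * p + ((r ^ 2 - M : ℕ) : ℝ) * q - τ) / σ)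
    have hd : |y / σ - (M * p + ((r ^ 2 - M : ℕ) : ℝ) * q - τ) / σ| ≤ 0.5 / σ := by
      rw [← sub_div, abs_div, abs_of_pos hσ0]
      gcongr
      have c1 := Nat.le_ceil τ
      have c2 := Nat.ceil_lt_add_one hτ0
      rw [abs_le, hy]; constructor <;> linarith
    have hpi := Real.pi_gt_three
    rw [htail]
    generalize (∫ t in (0:ℝ)..Real.pi, (pbChar p t ^ M * pbChar q t ^ (r ^ 2 - M) *
      Complex.exp (Complex.I * (y * t : ℝ))).im / (2 * Real.sin (t / 2))) = A at hcore ⊢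
    generalize (∫ t in Set.Ioi (0:ℝ), Real.exp (-(σ ^ 2 * t ^ 2 / 2)) * (Real.sin (y * t) / t)) = B at hcore hinv
    have h1 : |(1 / 2 + 1 / Real.pi * A) - stdNormalCDF (y / σ)| ≤ 0.534 / σ := by
      rw [hinv, show (1 / 2 + 1 / Real.pi * A) - (1 / 2 + 1 / Real.pi * B) = 1 / Real.pi * (A - B) by ring,
        abs_mul, abs_of_pos (by positivity : 0 < 1 / Real.pi)]
      have h3 : 1 / Real.pi ≤ 1 / 3 := one_div_le_one_div_of_le (by norm_num) hpi.le
      calc _ ≤ 1 / 3 * (1.6 / σ) := by gcongr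
        _ = (1.6 / 3) / σ := by ring
        _ ≤ _ := by gcongr; norm_num
    have h4 := abs_sub_le (1 / 2 + 1 / Real.pi * A) (stdNormalCDF (y / σ))
      (stdNormalCDF ((M * p + ((r ^ 2 - M : ℕ) : ℝ) * q - τ) / σ))
    have h5 : 0.534 / σ + 0.4 * (0.5 / σ) ≤ 0.7915 / σ := by
      rw [← mul_div_assoc, ← add_div]; gcongr; norm_num
    linarith
end
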